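/- arXiv:1003.3085 — 2 statements merged into one kernel-verified Lean document; each statement's English description precedes it below -/
import Mathlib

section
/- Let (G,H) be an Eulerian instance with three pairs of terminals, i.e. H = (VG, {s1t1, s2t2, s3t3}). Then (G,H) is feasible if and only if d_G(U) ≥ d_H(U) holds for every subset U ⊆ VG. -/
/-!
Necessity: every demand pair separated by `U` uses its own edge across `U`.

Sufficiency. Work with edge sets and their mod-2 boundaries: an edge set with boundary `a + b`
connects `a` to `b` (`reach_of_bd`), and conversely two connected vertices are joined by an edge set
with that boundary (`exists_bd`). Since `G + H` is Eulerian, deleting disjoint edge sets with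
boundaries `s1 + t1` and `s2 + t2` leaves boundary `s3 + t3`, so the third path comes for free, and
it suffices to find edge-disjoint connections for the first two pairs (`twoPaths`).

Take a trail `P` from `s1` to `t1` and let `F` be the remaining edges; suppose that `s2` and `t2`
lie in different components `C` and `D` of `F`. The cut condition forces `P` to meet both, say `C`
at `x` and later `D` at `y`. Choose this with the part `M` of `P` between `x` and `y` as short as
possible, and let `f` be the first edge of `M`. By the cut condition, `f` is not the only edge
crossing a set that separates both pairs, so some component `K` of `F` meets `P` in a vertex `u`
before `f` and in a vertex `w` after `f`. By parity (`four_odd`), each of `C` and `D` contains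
exactly one of `s3, t3`, and all other components are Eulerian. In `Config.improve`:
* if `K` is another component, rerouting `P` from `u` to `w` through `K` frees the stretch of `P`
  from `u` to `w`, and `u`, `w` remain connected in `K` (`reach_even`). Either `C` and `D` become
  connected, or the component of `s2` now contains `w`, which gives a shorter `M`;
* if `K = C` and `w` lies on `M`, then `M` can be shortened at once;
* otherwise `P` visits `C, D, C` or `D, C, D` in this order. Shortcutting `P` inside the component
  visited twice frees a connection to the other one, and the shortcut can be chosen so as to keep
  the terminal in that component attached to it (`exists_shortcut`).
-/

/-!
We encode a multigraph on vertex type `V` with edge-index type `E` by a map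
`G : E → V × V`: the edge with index `e` joins the (unordered) endpoints
`(G e).1` and `(G e).2`.
-/

/-- The degree of `v` in the multigraph `G`: the number of edge-ends of `G`
incident to `v` (a loop counts twice). -/
noncomputable def mdeg {V E : Type} (G : E → V × V) (v : V) : ℕ :=
  Set.ncard {p : E × Bool | (cond p.2 (G p.1).1 (G p.1).2) = v}

/-- `mcut G U` is `d_G(U)`: the number of edges of `G` having exactly one
endpoint in `U`. -/
noncomputable def mcut {V E : Type} (G : E → V × V) (U : Set V) : ℕ :=
  Set.ncard {e : E | ((G e).1 ∈ U ∧ (G e).2 ∉ U) ∨ ((G e).2 ∈ U ∧ (G e).1 ∉ U)}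

/-- Walks in the multigraph `G`; an edge may be traversed in either direction. -/
inductive MWalk {V E : Type} (G : E → V × V) : V → V → Type where
  | nil (v : V) : MWalk G v v
  | cons {u v w : V} (e : E) (he : G e = (u, v) ∨ G e = (v, u)) (tail : MWalk G v w) :
      MWalk G u w

namespace MWalk
/-- The list of edges traversed by a walk. -/
def edges {V E : Type} {G : E → V × V} : {u v : V} → MWalk G u v → List E
  | _, _, nil _ => []
  | _, _, cons e _ p => e :: p.edges
end MWalk

/-- An instance `(G, H)` (`H` is the demand multigraph, on the same vertex set)
is feasible if the demand edges can be routed by pairwise edge-disjoint paths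
of `G`: for each demand edge `i` there is a walk of `G` connecting its two
endpoints, the walks being pairwise edge-disjoint. -/
def MFeasible {V E E' : Type} (G : E → V × V) (H : E' → V × V) : Prop :=
  ∃ P : (i : E') → MWalk G (H i).1 (H i).2,
    ∀ i j : E', i ≠ j → List.Disjoint (P i).edges (P j).edges

/-- The multigraph `G` is connected (all of its vertex set lies in one
connected component). -/
def MConnected {V E : Type} (G : E → V × V) : Prop :=
  ∀ u v : V, Nonempty (MWalk G u v)

/-- The subgraph `G[U]` induced by `U` is connected: any two vertices of `U`
are joined by a walk all of whose edges have both endpoints in `U`. -/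
def MInducedConnected {V E : Type} (G : E → V × V) (U : Set V) : Prop :=
  ∀ u ∈ U, ∀ v ∈ U, ∃ p : MWalk G u v, ∀ e ∈ p.edges, (G e).1 ∈ U ∧ (G e).2 ∈ U

/-- The instance `(G, H)` is Eulerian: every vertex of `G + H` has even degree. -/
def MEulerian {V E E' : Type} (G : E → V × V) (H : E' → V × V) : Prop :=
  ∀ v : V, Even (mdeg G v + mdeg H v)

namespace ThreePairs

open Relation
open scoped Classical

variable {V E : Type} {G : E → V × V}

/-! ### Boundaries and reachability -/

/-- The mod-2 boundary of a finite edge set: the formal sum of the endpoints of its edges.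
Loops contribute `0`. -/
noncomputable def bd (G : E → V × V) (F : Finset E) : V →₀ ZMod 2 :=
  ∑ e ∈ F, (Finsupp.single (G e).1 1 + Finsupp.single (G e).2 1)

/-- The vertex `v` as an element of the `ZMod 2`-space on `V`. -/
noncomputable abbrev pt (v : V) : V →₀ ZMod 2 := Finsupp.single v 1

theorem self_add (x : V →₀ ZMod 2) : x + x = 0 := by
  ext v
  exact CharTwo.add_self_eq_zero (x v)

/-- `u` and `v` are joined by an edge of `F`. -/
def Step (G : E → V × V) (F : Finset E) (u v : V) : Prop :=
  ∃ e ∈ F, G e = (u, v) ∨ G e = (v, u)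

/-- `u` and `v` lie in the same component of the graph `(V, F)`. -/
def Reach (G : E → V × V) (F : Finset E) : V → V → Prop := ReflTransGen (Step G F)

/-- No edge of `F` leaves `S`, i.e. `S` is a union of components of `(V, F)`. -/
def Closed (G : E → V × V) (F : Finset E) (S : Set V) : Prop :=
  ∀ e ∈ F, ((G e).1 ∈ S ↔ (G e).2 ∈ S)

theorem Reach.rfl' {F : Finset E} {a : V} : Reach G F a a := ReflTransGen.refl

theorem Reach.tr {F : Finset E} {a b c : V} (h : Reach G F a b) (h' : Reach G F b c) :
    Reach G F a c := ReflTransGen.trans h h'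

theorem Reach.sym {F : Finset E} {a b : V} (h : Reach G F a b) : Reach G F b a := by
  induction h with
  | refl => exact ReflTransGen.refl
  | tail _ hstep ih =>
    obtain ⟨e, he, h⟩ := hstep
    exact ReflTransGen.head ⟨e, he, h.symm⟩ ih

theorem Reach.mono {F F' : Finset E} {a b : V} (h : Reach G F a b) (hs : F ⊆ F') :
    Reach G F' a b := by
  induction h with
  | refl => exact ReflTransGen.refl
  | tail _ hstep ih =>
    obtain ⟨e, he, h⟩ := hstep
    exact ih.tail ⟨e, hs he, h⟩

theorem reach_edge {F : Finset E} {e : E} (he : e ∈ F) : Reach G F (G e).1 (G e).2 :=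
  ReflTransGen.single ⟨e, he, Or.inl rfl⟩

theorem closed_reach (F : Finset E) (a : V) : Closed G F {v | Reach G F a v} :=
  fun _ he => ⟨fun h => Reach.tr h (reach_edge he), fun h => Reach.tr h (reach_edge he).sym⟩

theorem Closed.mem {F : Finset E} {S : Set V} (hS : Closed G F S) {a b : V}
    (h : Reach G F a b) (ha : a ∈ S) : b ∈ S := by
  induction h with
  | refl => exact ha
  | tail _ hstep ih =>
    obtain ⟨e, he, h | h⟩ := hstep <;> have := hS e he <;> simp_all

theorem bd_union {A B : Finset E} (h : Disjoint A B) : bd G (A ∪ B) = bd G A + bd G B :=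
  Finset.sum_union h

theorem bd_sdiff {A B : Finset E} (h : B ⊆ A) : bd G (A \ B) = bd G A + bd G B := by
  have : bd G A = bd G (A \ B) + bd G B := (Finset.sum_sdiff h).symm
  rw [this, add_assoc, self_add, add_zero]

/-- The parity of a vector on the vertex set `S`. -/
noncomputable def par (S : Set V) : (V →₀ ZMod 2) →ₗ[ZMod 2] ZMod 2 :=
  Finsupp.linearCombination (ZMod 2) (fun v => if v ∈ S then (1 : ZMod 2) else 0)

theorem par_pt (S : Set V) (v : V) : par S (pt v) = if v ∈ S then 1 else 0 := by
  simp [par, pt]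

/-- Handshake lemma on a union of components. -/
theorem par_bd {F : Finset E} {S : Set V} (hS : Closed G F S) : par S (bd G F) = 0 := by
  rw [bd, map_sum]
  refine Finset.sum_eq_zero fun e he => ?_
  rw [map_add, par_pt, par_pt]
  have := hS e he
  by_cases h : (G e).1 ∈ S
  · rw [if_pos h, if_pos (this.1 h)]; decide
  · rw [if_neg h, if_neg (fun h' => h (this.2 h'))]; decide

theorem reach_of_bd {F : Finset E} {a b : V} (h : bd G F = pt a + pt b) : Reach G F a b := by
  have := par_bd (closed_reach (G := G) F a)
  rw [h, map_add, par_pt, par_pt] at this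
  by_contra hb
  rw [if_pos (show a ∈ {v | Reach G F a v} from Reach.rfl'),
    if_neg (show b ∉ {v | Reach G F a v} from hb)] at this
  exact absurd this (by decide)

theorem exists_bd {F : Finset E} {a b : V} (h : Reach G F a b) :
    ∃ P ⊆ F, bd G P = pt a + pt b := by
  induction h with
  | refl => exact ⟨∅, by simp, by simp [bd, self_add]⟩
  | @tail b c _ hstep ih =>
    obtain ⟨P, hP, hb⟩ := ih
    obtain ⟨e, he, h⟩ := hstep
    have hbc : bd G {e} = pt b + pt c := by
      rcases h with h | h <;> simp [bd, h, pt, add_comm]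
    have key : pt a + pt b + (pt b + pt c) = pt a + pt c := by
      rw [add_assoc, ← add_assoc (pt b), self_add, zero_add]
    by_cases heP : e ∈ P
    · refine ⟨P \ {e}, Finset.sdiff_subset.trans hP, ?_⟩
      rw [bd_sdiff (by simpa using heP), hb, hbc, key]
    · refine ⟨P ∪ {e}, Finset.union_subset hP (by simpa using he), ?_⟩
      rw [bd_union (by simpa using heP), hb, hbc, key]

/-- A walk from `a` only uses edges of the component of `a`. -/
theorem reach_filter {F : Finset E} {a b : V} (h : Reach G F a b) :
    Reach G (F.filter fun e => Reach G F a (G e).1) a b := by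
  induction h with
  | refl => exact Reach.rfl'
  | tail h' hstep ih =>
    refine ih.tr (ReflTransGen.single ?_)
    obtain ⟨e, he, h⟩ := hstep
    refine ⟨e, Finset.mem_filter.2 ⟨he, ?_⟩, h⟩
    rcases h with h | h
    · rw [h]; exact h'
    · rw [h]; exact ReflTransGen.tail h' ⟨e, he, Or.inr h⟩

/-- Two vertices joined in `F` are joined by a connected edge set with the right boundary. -/
theorem exists_conn {F : Finset E} {a b : V} (h : Reach G F a b) :
    ∃ P ⊆ F, bd G P = pt a + pt b ∧ ∀ e ∈ P, Reach G P a (G e).1 := by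
  have hne : (F.powerset.filter fun P => bd G P = pt a + pt b).Nonempty := by
    obtain ⟨P, hP, hb⟩ := exists_bd h
    exact ⟨P, by simp [hP, hb]⟩
  -- A subset of minimal cardinality with this boundary has no further component.
  obtain ⟨P, hP, hmin⟩ := Finset.exists_min_image _ Finset.card hne
  simp only [Finset.mem_filter, Finset.mem_powerset] at hP hmin
  refine ⟨P, hP.1, hP.2, ?_⟩
  obtain ⟨Q, hQ, hQb⟩ := exists_bd (reach_filter (reach_of_bd hP.2))
  have hQP : Q ⊆ P := hQ.trans (Finset.filter_subset _ _)
  have : Q = P := Finset.eq_of_subset_of_card_le hQP (hmin Q ⟨hQP.trans hP.1, hQb⟩)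
  intro e he
  rw [← this] at he
  exact (Finset.mem_filter.1 (hQ he)).2

/-- Cutting a trail from `a` to `b` at a vertex `u` it visits. -/
theorem exists_split {A : Finset E} {a b u : V} (hA : bd G A = pt a + pt b)
    (hu : Reach G A a u) : ∃ A₁ ⊆ A, ∃ A₂ ⊆ A, Disjoint A₁ A₂ ∧ Reach G A₁ a u ∧
      Reach G A₂ u b := by
  obtain ⟨A₁, h₁, hb⟩ := exists_bd hu
  refine ⟨A₁, h₁, A \ A₁, Finset.sdiff_subset, Finset.disjoint_sdiff, reach_of_bd hb,
    reach_of_bd ?_⟩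
  rw [bd_sdiff h₁, hA, hb]
  calc pt a + pt b + (pt a + pt u) = (pt a + pt a) + (pt u + pt b) := by abel
    _ = _ := by rw [self_add, zero_add]

/-- Deleting edges in the component of `p` does not affect walks outside that component. -/
theorem reach_away {F Q : Finset E} {p q d : V} (hQ : ∀ e ∈ Q, Reach G F p (G e).1)
    (hpq : ¬ Reach G F p q) (h : Reach G F q d) : Reach G (F \ Q) q d := by
  refine (reach_filter h).mono fun e he => ?_
  rw [Finset.mem_filter] at he
  exact Finset.mem_sdiff.2 ⟨he.1, fun heQ => hpq ((hQ e heQ).tr he.2.sym)⟩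

/-! ### Four odd vertices -/

/-- If `p` and `q` lie in different components of a graph with odd vertices `p, q, r, t`, then
each of their components contains exactly one of `r, t`. -/
theorem four_odd {F : Finset E} {p q r t : V} (hF : bd G F = pt p + pt q + (pt r + pt t))
    (hpq : ¬ Reach G F p q) : ¬ (Reach G F p r ↔ Reach G F p t) := by
  intro hiff
  have := par_bd (closed_reach (G := G) F p)
  rw [hF, map_add, map_add, map_add, par_pt, par_pt, par_pt, par_pt] at this
  simp only [Set.mem_ofPred_eq] at this
  rw [if_pos (show Reach G F p p from Reach.rfl'), if_neg hpq] at this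
  by_cases hr : Reach G F p r
  · rw [if_pos hr, if_pos (hiff.1 hr)] at this; exact absurd this (by decide)
  · rw [if_neg hr, if_neg (fun h => hr (hiff.2 h))] at this; exact absurd this (by decide)

/-- In a graph with odd vertices `p, q, r, t`, where `p` and `q` are not connected, the components
other than theirs carry no odd vertex, so deleting a trail from `u` to `w` in such a component
leaves `u` and `w` connected. -/
theorem reach_even {F Q : Finset E} {p q r t u w : V}
    (hF : bd G F = pt p + pt q + (pt r + pt t)) (hpq : ¬ Reach G F p q)
    (hpu : ¬ Reach G F p u) (hqu : ¬ Reach G F q u) (hQF : Q ⊆ F)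
    (hQ : bd G Q = pt u + pt w) : Reach G (F \ Q) u w := by
  have h1 := four_odd hF hpq
  have h2 := four_odd (p := q) (q := p) (r := r) (t := t) (by rw [hF, add_comm (pt p)])
    (fun h => hpq h.sym)
  have hur : ¬ Reach G F u r := by
    intro h
    have hr1 : ¬ Reach G F p r := fun h' => hpu (h'.tr h.sym)
    have hr2 : ¬ Reach G F q r := fun h' => hqu (h'.tr h.sym)
    have ht1 : Reach G F p t := by tauto
    have ht2 : Reach G F q t := by tauto
    exact hpq (ht1.tr ht2.sym)
  have hut : ¬ Reach G F u t := by
    intro h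
    have hr1 : ¬ Reach G F p t := fun h' => hpu (h'.tr h.sym)
    have hr2 : ¬ Reach G F q t := fun h' => hqu (h'.tr h.sym)
    have ht1 : Reach G F p r := by tauto
    have ht2 : Reach G F q r := by tauto
    exact hpq (ht1.tr ht2.sym)
  have hm : ∀ v, Reach G (F \ Q) u v → Reach G F u v := fun v h => h.mono Finset.sdiff_subset
  have := par_bd (closed_reach (G := G) (F \ Q) u)
  rw [bd_sdiff hQF, hF, hQ] at this
  simp only [map_add, par_pt, Set.mem_ofPred_eq] at this
  rw [if_neg (fun h => hpu (hm _ h).sym), if_neg (fun h => hqu (hm _ h).sym),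
    if_neg (fun h => hur (hm _ h)), if_neg (fun h => hut (hm _ h)),
    if_pos (show Reach G (F \ Q) u u from Reach.rfl')] at this
  by_contra h
  rw [if_neg h] at this
  exact absurd this (by decide)

/-- If `x, y` lie in the component of `p`, some connection of `x` and `y` inside this component
leaves `p` connected to one of `x, y`. -/
theorem exists_shortcut {F : Finset E} {p q r t x y : V}
    (hF : bd G F = pt p + pt q + (pt r + pt t)) (hpq : ¬ Reach G F p q)
    (hx : Reach G F p x) (hy : Reach G F p y) :
    ∃ Q ⊆ F, Reach G Q x y ∧ (Reach G (F \ Q) p x ∨ Reach G (F \ Q) p y) ∧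
      ∀ d, Reach G F q d → Reach G (F \ Q) q d := by
  obtain ⟨R, hRF, hR, hRc⟩ := exists_conn hx
  have fin : ∀ B T : Finset E, B ⊆ F → T ⊆ F → Disjoint B T → Reach G B x y →
      (Reach G T p x ∨ Reach G T p y) →
      ∃ Q ⊆ F, Reach G Q x y ∧ (Reach G (F \ Q) p x ∨ Reach G (F \ Q) p y) ∧
      ∀ d, Reach G F q d → Reach G (F \ Q) q d := by
    intro B T hB hT hBT hxy hT'
    obtain ⟨Q, hQB, hQ, hQc⟩ := exists_conn hxy
    have hTQ : T ⊆ F \ Q := fun e he => Finset.mem_sdiff.2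
      ⟨hT he, fun h => Finset.disjoint_left.1 hBT (hQB h) he⟩
    refine ⟨Q, hQB.trans hB, reach_of_bd hQ, hT'.imp (·.mono hTQ) (·.mono hTQ), ?_⟩
    exact fun d hd => reach_away
      (fun e he => hx.tr ((hQc e he).mono (hQB.trans hB))) hpq hd
  by_cases hxy : Reach G (F \ R) x y
  · exact fin (F \ R) R Finset.sdiff_subset hRF Finset.sdiff_disjoint hxy
      (Or.inl (reach_of_bd hR))
  -- Otherwise the component of `y` in `F \ R` meets the trail `R` in a vertex `z`.
  obtain ⟨z, hyz, hz⟩ : ∃ z, Reach G (F \ R) y z ∧ Reach G R p z := by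
    by_contra! hno
    have hcl : Closed G F {v | Reach G (F \ R) y v} := by
      intro e he
      by_cases heR : e ∈ R
      · have h1 := hRc e heR
        have h2 := h1.tr (reach_edge heR)
        exact ⟨fun h => (hno _ h h1).elim, fun h => (hno _ h h2).elim⟩
      · exact closed_reach (F \ R) y e (Finset.mem_sdiff.2 ⟨he, heR⟩)
    have : Reach G (F \ R) y x := hcl.mem (hy.sym.tr hx) (show Reach G (F \ R) y y from Reach.rfl')
    exact hxy this.sym
  obtain ⟨R₁, hR₁, R₂, hR₂, hR₁₂, hpz, hzx⟩ := exists_split hR hz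
  obtain ⟨J, hJ, hJb⟩ := exists_bd hyz
  -- The component of `y` in `F \ R` is even, so `J` can be removed from it.
  have hF1 : bd G (F \ R) = pt x + pt q + (pt r + pt t) := by
    rw [bd_sdiff hRF, hF, hR]
    calc _ = (pt p + pt p) + (pt x + pt q + (pt r + pt t)) := by abel
      _ = _ := by rw [self_add, zero_add]
  have hxq : ¬ Reach G (F \ R) x q := fun h => hpq (hx.tr (h.mono Finset.sdiff_subset))
  have hqy : ¬ Reach G (F \ R) q y := fun h =>
    hpq (hy.tr (h.mono Finset.sdiff_subset).sym)
  have hyz' : Reach G ((F \ R) \ J) y z := reach_even hF1 hxq hxy hqy hJ hJb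
  refine fin (R₂ ∪ ((F \ R) \ J)) (R₁ ∪ J) ?_ ?_ ?_ ?_ (Or.inr ?_)
  · grind
  · grind
  · rw [Finset.disjoint_left] at hR₁₂ ⊢; grind
  · exact (hzx.sym.mono Finset.subset_union_left).tr
      (hyz'.sym.mono Finset.subset_union_right)
  · exact (hpz.mono Finset.subset_union_left).tr
      ((reach_of_bd hJb).sym.mono Finset.subset_union_right)

/-! ### Rerouting -/

/-- Edge-disjoint connections for the first two pairs. -/
def TwoPaths (G : E → V × V) (s1 t1 s2 t2 : V) : Prop :=
  ∃ P X : Finset E, Disjoint P X ∧ Reach G P s1 t1 ∧ Reach G X s2 t2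

/-- Disjoint edge sets `A`, `M`, `N` connecting `s1` to `x`, `x` to `y` and `y` to `t1`, such that in
the remaining graph `x` is connected to `s2` and `y` is connected to `t2`. The sets may contain more
edges than a trail does. -/
structure Config [Fintype E] (G : E → V × V) (s1 t1 s2 t2 : V) (A M N : Finset E) (x y : V) :
    Prop where
  dAM : Disjoint A M
  dAN : Disjoint A N
  dMN : Disjoint M N
  hA : Reach G A s1 x
  hM : Reach G M x y
  hN : Reach G N y t1
  hx : Reach G (A ∪ M ∪ N)ᶜ s2 x
  hy : Reach G (A ∪ M ∪ N)ᶜ t2 y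

/-- Every set containing `s1, s2` but not `t1, t2` is left by at least two edges, stated as: by some
edge other than any given `f`. -/
def NoBadBridge (G : E → V × V) (s1 t1 s2 t2 : V) : Prop :=
  ∀ S : Set V, s1 ∈ S → t1 ∉ S → s2 ∈ S → t2 ∉ S → ∀ f : E,
    ∃ e, e ≠ f ∧ ¬ ((G e).1 ∈ S ↔ (G e).2 ∈ S)

/-- A configuration either yields two disjoint paths or can be changed into one with a shorter
middle part. -/
theorem Config.improve [Fintype E] {s1 t1 s2 t2 s3 t3 : V}
    (hE : bd G Finset.univ = pt s1 + pt t1 + (pt s2 + pt t2 + (pt s3 + pt t3)))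
    (hbr : NoBadBridge G s1 t1 s2 t2) {A M N : Finset E} {x y : V}
    (hc : Config G s1 t1 s2 t2 A M N x y) (hno : ¬ TwoPaths G s1 t1 s2 t2) :
    ∃ A' M' N' x' y', Config G s1 t1 s2 t2 A' M' N' x' y' ∧ M'.card < M.card := by
  obtain ⟨dAM₀, dAN₀, dMN₀, hA₀, hM₀, hN₀, hx₀, hy₀⟩ := hc
  have hxy : x ≠ y := by
    rintro rfl
    refine hno ⟨A ∪ M ∪ N, (A ∪ M ∪ N)ᶜ, disjoint_compl_right, ?_, hx₀.tr hy₀.sym⟩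
    exact ((hA₀.mono (by grind)).tr (hM₀.mono (by grind))).tr (hN₀.mono (by grind))
  -- `f = xz` is a first edge of the middle part, and the other parts are made connected.
  obtain ⟨K, hKM, hKb⟩ := exists_bd hM₀
  obtain ⟨z, ⟨f, hfK, hf⟩, -⟩ : ∃ z, Step G K x z ∧ Reach G K z y := by
    rcases ReflTransGen.cases_head (reach_of_bd hKb) with h | h
    · exact absurd h hxy
    · exact h
  have hfb : bd G {f} = pt x + pt z := by
    rcases hf with h | h <;> simp [bd, h, pt, add_comm]
  have hyz : Reach G (K \ {f}) y z := by
    apply reach_of_bd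
    rw [bd_sdiff (by simpa using hfK), hKb, hfb]
    calc _ = (pt x + pt x) + (pt y + pt z) := by abel
      _ = _ := by rw [self_add, zero_add]
  obtain ⟨M', hM'K, hM'b, hM'c⟩ := exists_conn hyz
  obtain ⟨A', hA'A, hAb, hAc⟩ := exists_conn hA₀
  obtain ⟨N', hN'N, hNb, hNc⟩ := exists_conn hN₀
  have hfM : f ∈ M := hKM hfK
  have hfM' : f ∉ M' := fun h => by simpa using hM'K h
  have hM'M : M' ⊆ M := fun e he => hKM (Finset.mem_sdiff.1 (hM'K he)).1
  rw [Finset.disjoint_left] at dAM₀ dAN₀ dMN₀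
  have dAf : f ∉ A' := fun h => dAM₀ (hA'A h) hfM
  have dNf : f ∉ N' := fun h => dMN₀ hfM (hN'N h)
  have dAM : ∀ e ∈ A', e ∉ M' := fun e h h' => dAM₀ (hA'A h) (hM'M h')
  have dAN : ∀ e ∈ A', e ∉ N' := fun e h h' => dAN₀ (hA'A h) (hN'N h')
  have dMN : ∀ e ∈ M', e ∉ N' := fun e h h' => dMN₀ (hM'M h) (hN'N h')
  have hcard : ∀ B : Finset E, B ⊆ M' → B.card < M.card := fun B hB =>
    Finset.card_lt_card ⟨hB.trans hM'M, fun h => hfM' (hB (h hfM))⟩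
  obtain ⟨F, hFdef⟩ : ∃ F : Finset E, F = (A' ∪ ({f} ∪ M') ∪ N')ᶜ := ⟨_, rfl⟩
  have hFm : ∀ e, e ∈ F ↔ e ∉ A' ∧ e ≠ f ∧ e ∉ M' ∧ e ∉ N' := by
    intro e; simp [hFdef]; tauto
  have hsub : (A ∪ M ∪ N)ᶜ ⊆ F := by
    intro e he
    simp only [Finset.mem_compl, Finset.mem_union, not_or] at he
    rw [hFm]
    exact ⟨fun h => he.1.1 (hA'A h), fun h => he.1.2 (h ▸ hfM), fun h => he.1.2 (hM'M h),
      fun h => he.2 (hN'N h)⟩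
  have hx := hx₀.mono hsub
  have hy := hy₀.mono hsub
  have hA := reach_of_bd hAb
  have hN := reach_of_bd hNb
  have hf' : Reach G {f} x z := reach_of_bd hfb
  have hM' := reach_of_bd hM'b
  have hF : bd G F = pt s2 + pt t2 + (pt s3 + pt t3) := by
    have : F = Finset.univ \ (A' ∪ ({f} ∪ M') ∪ N') := by rw [hFdef, Finset.compl_eq_univ_sdiff]
    rw [this, bd_sdiff (Finset.subset_univ _), bd_union (by rw [Finset.disjoint_left]; grind),
      bd_union (by rw [Finset.disjoint_left]; grind),
      bd_union (by rw [Finset.disjoint_left]; grind), hE, hAb, hfb, hM'b, hNb]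
    calc _ = (pt s1 + pt s1) + (pt t1 + pt t1) + (pt x + pt x) + (pt y + pt y) +
          (pt z + pt z) + (pt s2 + pt t2 + (pt s3 + pt t3)) := by abel
      _ = _ := by simp only [self_add, zero_add]
  have hF' : bd G F = pt t2 + pt s2 + (pt s3 + pt t3) := by rw [hF, add_comm (pt s2)]
  have hCD : ¬ Reach G F s2 t2 := by
    intro h
    refine hno ⟨A' ∪ ({f} ∪ M') ∪ N', F, by rw [hFdef]; exact disjoint_compl_right, ?_, h⟩
    exact (hA.mono (by grind)).tr ((hf'.mono (by grind)).tr ((hM'.sym.mono (by grind)).tr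
      (hN.mono (by grind))))
  have hDC : ¬ Reach G F t2 s2 := fun h => hCD h.sym
  -- As `f` is not a bad bridge, some component of `F` meets the trail on both sides of `f`.
  obtain ⟨u, w, hu, hw, huw⟩ : ∃ u w, Reach G A' s1 u ∧ (Reach G M' y w ∨ Reach G N' y w) ∧
      Reach G F u w := by
    by_contra! hcon
    let S : Set V := {v | ∃ u, Reach G A' s1 u ∧ Reach G F u v}
    have hS : ∀ w, (Reach G M' y w ∨ Reach G N' y w) → ∀ v, Reach G F w v → v ∉ S := by
      rintro w hw v hv ⟨u, hu, huv⟩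
      exact hcon u w hu hw (huv.tr hv.sym)
    obtain ⟨e, hef, he⟩ := hbr S ⟨s1, Reach.rfl', Reach.rfl'⟩
      (hS t1 (Or.inr hN) t1 Reach.rfl') ⟨x, hA, hx.sym⟩ (hS y (Or.inl Reach.rfl') t2 hy.sym) f
    apply he
    by_cases h1 : e ∈ A'
    · exact ⟨fun _ => ⟨_, (hAc e h1).tr (reach_edge h1), Reach.rfl'⟩,
        fun _ => ⟨_, hAc e h1, Reach.rfl'⟩⟩
    by_cases h2 : e ∈ M'
    · exact ⟨fun h => (hS _ (Or.inl (hM'c e h2)) _ Reach.rfl' h).elim,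
        fun h => (hS _ (Or.inl ((hM'c e h2).tr (reach_edge h2))) _ Reach.rfl' h).elim⟩
    by_cases h3 : e ∈ N'
    · exact ⟨fun h => (hS _ (Or.inr (hNc e h3)) _ Reach.rfl' h).elim,
        fun h => (hS _ (Or.inr ((hNc e h3).tr (reach_edge h3))) _ Reach.rfl' h).elim⟩
    have h4 : e ∈ F := (hFm e).2 ⟨h1, hef, h2, h3⟩
    exact ⟨fun ⟨u, hu, h⟩ => ⟨u, hu, h.tr (reach_edge h4)⟩,
      fun ⟨u, hu, h⟩ => ⟨u, hu, h.tr (reach_edge h4).sym⟩⟩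
  obtain ⟨A₁, hA₁, A₂, hA₂, dA, hs1u, hux⟩ := exists_split hAb hu
  rw [Finset.disjoint_left] at dA
  by_cases hDu : Reach G F t2 u
  · -- The trail visits the components of `t2`, `s2`, `t2` in this order.
    exfalso
    obtain ⟨Q, hQF, huy, hor, haw⟩ := exists_shortcut hF' hDC hDu hy
    refine hno ⟨A₁ ∪ Q ∪ N', F \ Q ∪ A₂ ∪ ({f} ∪ M'), ?_, ?_, ?_⟩
    · rw [Finset.disjoint_left]; grind
    · exact (hs1u.mono (by grind)).tr ((huy.mono (by grind)).tr (hN.mono (by grind)))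
    · refine ((haw x hx).mono (by grind)).tr ?_
      rcases hor with h | h
      · exact (hux.sym.mono (by grind)).tr (h.sym.mono (by grind))
      · exact ((hf'.mono (by grind)).tr (hM'.sym.mono (by grind))).tr (h.sym.mono (by grind))
  rcases hw with hw | hw
  · obtain ⟨M₂, hM₂, M₁, hM₁, dM, hyw, hwz⟩ := exists_split hM'b hw
    rw [Finset.disjoint_left] at dM
    by_cases hCu : Reach G F s2 u
    · -- The component of `s2` is visited later than at `x`.
      refine ⟨A' ∪ ({f} ∪ M₁), M₂, N', w, y, ⟨?_, ?_, ?_, ?_, hyw.sym, hN, ?_, ?_⟩,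
        hcard _ hM₂⟩
      · rw [Finset.disjoint_left]; grind
      · rw [Finset.disjoint_left]; grind
      · rw [Finset.disjoint_left]; grind
      · exact (hA.mono (by grind)).tr ((hf'.mono (by grind)).tr (hwz.sym.mono (by grind)))
      · exact (hCu.tr huw).mono (by intro e; simp; grind)
      · exact hy.mono (by intro e; simp; grind)
    · -- Reroute from `u` to `w` through an even component.
      obtain ⟨Q, hQF, hQb, hQc⟩ := exists_conn huw
      have hQu : ∀ e ∈ Q, Reach G F u (G e).1 := fun e he => (hQc e he).mono hQF
      have hF2 : F \ Q ∪ A₂ ∪ ({f} ∪ M₁) ⊆ (A₁ ∪ Q ∪ M₂ ∪ N')ᶜ := by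
        intro e; simp; grind
      refine ⟨A₁ ∪ Q, M₂, N', w, y, ⟨?_, ?_, ?_, ?_, hyw.sym, hN, ?_, ?_⟩,
        hcard _ hM₂⟩
      · rw [Finset.disjoint_left]; grind
      · rw [Finset.disjoint_left]; grind
      · rw [Finset.disjoint_left]; grind
      · exact (hs1u.mono (by grind)).tr ((reach_of_bd hQb).mono (by grind))
      · refine Reach.mono ?_ hF2
        have h1 := reach_away hQu (fun h => hCu h.sym) hx
        have h2 := reach_even hF hCD hCu hDu hQF hQb
        exact (h1.mono (by grind)).tr ((hux.sym.mono (by grind)).tr (h2.mono (by grind)))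
      · have h1 := reach_away hQu (fun h => hDu h.sym) hy
        exact h1.mono (Finset.Subset.trans (by grind) hF2)
  · exfalso
    obtain ⟨N₁, hN₁, N₂, hN₂, dN, hyw, hwt⟩ := exists_split hNb hw
    rw [Finset.disjoint_left] at dN
    by_cases hCu : Reach G F s2 u
    · -- The trail visits the components of `s2`, `t2`, `s2` in this order.
      obtain ⟨Q, hQF, hxw, hor, haw⟩ := exists_shortcut hF hCD hx (hCu.tr huw)
      refine hno ⟨A' ∪ Q ∪ N₂, F \ Q ∪ N₁ ∪ ({f} ∪ M'), ?_, ?_, ?_⟩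
      · rw [Finset.disjoint_left]; grind
      · exact (hA.mono (by grind)).tr ((hxw.mono (by grind)).tr (hwt.mono (by grind)))
      · refine Reach.tr ?_ ((haw y hy).sym.mono (by grind))
        rcases hor with h | h
        · exact (h.mono (by grind)).tr ((hf'.mono (by grind)).tr (hM'.sym.mono (by grind)))
        · exact (h.mono (by grind)).tr (hyw.sym.mono (by grind))
    · obtain ⟨Q, hQF, hQb, hQc⟩ := exists_conn huw
      have hQu : ∀ e ∈ Q, Reach G F u (G e).1 := fun e he => (hQc e he).mono hQF
      have h1 := reach_away hQu (fun h => hCu h.sym) hx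
      have h2 := reach_away hQu (fun h => hDu h.sym) hy
      refine hno ⟨A₁ ∪ Q ∪ N₂, F \ Q ∪ ({f} ∪ M'), ?_, ?_, ?_⟩
      · rw [Finset.disjoint_left]; grind
      · exact (hs1u.mono (by grind)).tr (((reach_of_bd hQb).mono (by grind)).tr
          (hwt.mono (by grind)))
      · exact (h1.mono (by grind)).tr ((hf'.mono (by grind)).tr
          ((hM'.sym.mono (by grind)).tr (h2.sym.mono (by grind))))

/-- Induction on the length of the middle part. -/
theorem Config.twoPaths [Fintype E] {s1 t1 s2 t2 s3 t3 : V}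
    (hE : bd G Finset.univ = pt s1 + pt t1 + (pt s2 + pt t2 + (pt s3 + pt t3)))
    (hbr : NoBadBridge G s1 t1 s2 t2) {A M N : Finset E} {x y : V}
    (hc : Config G s1 t1 s2 t2 A M N x y) : TwoPaths G s1 t1 s2 t2 := by
  induction hn : M.card using Nat.strong_induction_on generalizing A M N x y with
  | _ n ih =>
    by_contra hno
    obtain ⟨A', M', N', x', y', hc', hlt⟩ := hc.improve hE hbr hno
    exact hno (ih _ (hn ▸ hlt) hc' rfl)

/-- The first two pairs can be connected disjointly. It remains to find some configuration; the two
orders in which the trail may meet the components of `s2` and `t2` account for the two versions of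
the bridge condition. -/
theorem twoPaths [Fintype E] {s1 t1 s2 t2 s3 t3 : V}
    (hE : bd G Finset.univ = pt s1 + pt t1 + (pt s2 + pt t2 + (pt s3 + pt t3)))
    (h0 : ∀ S : Set V, s1 ∈ S → t1 ∉ S → ∃ e, ¬ ((G e).1 ∈ S ↔ (G e).2 ∈ S))
    (h1 : ∀ S : Set V, ¬ (s2 ∈ S ↔ t2 ∈ S) → ∃ e, ¬ ((G e).1 ∈ S ↔ (G e).2 ∈ S))
    (hbr : NoBadBridge G s1 t1 s2 t2) (hbr' : NoBadBridge G s1 t1 t2 s2) :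
    TwoPaths G s1 t1 s2 t2 := by
  by_contra hno
  have hst : Reach G Finset.univ s1 t1 := by
    by_contra h
    obtain ⟨e, he⟩ := h0 {v | Reach G Finset.univ s1 v} Reach.rfl' h
    exact he (closed_reach _ s1 e (Finset.mem_univ _))
  -- The component of `s2` or `t2` avoiding `P` has an edge leaving it, which must be in `P`.
  have touch : ∀ (P : Finset E) (a b : V), ¬ Reach G Pᶜ a b → (a = s2 ∧ b = t2 ∨ a = t2 ∧ b = s2) →
      ∃ e ∈ P, Reach G Pᶜ a (G e).1 ∨ Reach G Pᶜ a (G e).2 := by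
    intro P a b hab hor
    obtain ⟨e, he⟩ := h1 {v | Reach G Pᶜ a v} (by
      have ha : Reach G Pᶜ a a := Reach.rfl'
      rcases hor with ⟨rfl, rfl⟩ | ⟨rfl, rfl⟩ <;> simp only [Set.mem_ofPred_eq] <;> tauto)
    have heP : e ∈ P := by
      by_contra heP
      exact he (closed_reach _ a e (Finset.mem_compl.2 heP))
    refine ⟨e, heP, ?_⟩
    simp only [Set.mem_ofPred_eq] at he
    tauto
  have conn : ∀ (A B : Finset E) (c : V), Disjoint A B → Reach G A s1 c → Reach G B c t1 →
      ¬ Reach G (A ∪ B)ᶜ s2 t2 := fun A B c hd hA hB h =>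
    hno ⟨A ∪ B, (A ∪ B)ᶜ, disjoint_compl_right, (hA.mono (by grind)).tr (hB.mono (by grind)), h⟩
  obtain ⟨P, -, hP, hPc⟩ := exists_conn hst
  have hPno : ¬ Reach G Pᶜ s2 t2 := fun h =>
    hno ⟨P, Pᶜ, disjoint_compl_right, reach_of_bd hP, h⟩
  obtain ⟨c, hc, hsc⟩ : ∃ c, Reach G Pᶜ s2 c ∧ Reach G P s1 c := by
    obtain ⟨e, he, h | h⟩ := touch P s2 t2 hPno (Or.inl ⟨rfl, rfl⟩)
    · exact ⟨_, h, hPc e he⟩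
    · exact ⟨_, h, (hPc e he).tr (reach_edge he)⟩
  obtain ⟨A₀, hA₀, B₀, hB₀, dAB₀, hsA, hcB⟩ := exists_split hP hsc
  obtain ⟨A, hAA, hA, hAc⟩ := exists_conn hsA
  obtain ⟨B, hBB, hB, hBc⟩ := exists_conn hcB
  have dAB : Disjoint A B := Finset.disjoint_of_subset_left hAA
    (Finset.disjoint_of_subset_right hBB dAB₀)
  have hcF : Reach G (A ∪ B)ᶜ s2 c := hc.mono (by intro e; simp; grind)
  have hno' := conn A B c dAB (reach_of_bd hA) (reach_of_bd hB)
  obtain ⟨d, hd, hd'⟩ : ∃ d, Reach G (A ∪ B)ᶜ t2 d ∧ (Reach G A s1 d ∨ Reach G B c d) := by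
    obtain ⟨e, he, h⟩ := touch (A ∪ B) t2 s2 (fun h => hno' h.sym) (Or.inr ⟨rfl, rfl⟩)
    rcases Finset.mem_union.1 he with he | he
    · exact h.elim (fun h => ⟨_, h, Or.inl (hAc e he)⟩)
        (fun h => ⟨_, h, Or.inl ((hAc e he).tr (reach_edge he))⟩)
    · exact h.elim (fun h => ⟨_, h, Or.inr (hBc e he)⟩)
        (fun h => ⟨_, h, Or.inr ((hBc e he).tr (reach_edge he))⟩)
  rw [Finset.disjoint_left] at dAB
  rcases hd' with hd' | hd'
  · obtain ⟨A₁, hA₁, A₂, hA₂, dA, hsd, hdc⟩ := exists_split hA hd'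
    have hsub : (A ∪ B)ᶜ ⊆ (A₁ ∪ A₂ ∪ B)ᶜ := by intro e; simp; grind
    have hcfg : Config G s1 t1 t2 s2 A₁ A₂ B d c :=
      ⟨dA, by rw [Finset.disjoint_left]; grind, by rw [Finset.disjoint_left]; grind, hsd, hdc,
        reach_of_bd hB, hd.mono hsub, hcF.mono hsub⟩
    obtain ⟨P', X, hPX, hP', hX⟩ := hcfg.twoPaths (s3 := s3) (t3 := t3)
      (by rw [hE, add_comm (pt s2)]) hbr'
    exact hno ⟨P', X, hPX, hP', hX.sym⟩
  · obtain ⟨B₁, hB₁, B₂, hB₂, dB, hcd, hdt⟩ := exists_split hB hd'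
    have hsub : (A ∪ B)ᶜ ⊆ (A ∪ B₁ ∪ B₂)ᶜ := by intro e; simp; grind
    have hcfg : Config G s1 t1 s2 t2 A B₁ B₂ c d :=
      ⟨by rw [Finset.disjoint_left]; grind, by rw [Finset.disjoint_left]; grind, dB,
        reach_of_bd hA, hcd, hdt, hcF.mono hsub, hd.mono hsub⟩
    exact hno (hcfg.twoPaths hE hbr)

/-! ### Walks, degrees and cuts -/

theorem exists_walk {F : Finset E} {a b : V} (h : Reach G F a b) :
    ∃ p : MWalk G a b, ∀ e ∈ p.edges, e ∈ F := by
  induction h using ReflTransGen.head_induction_on with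
  | refl => exact ⟨MWalk.nil b, by simp [MWalk.edges]⟩
  | head hstep _ ih =>
    obtain ⟨e, he, h⟩ := hstep
    obtain ⟨p, hp⟩ := ih
    exact ⟨MWalk.cons e h p, by simpa [MWalk.edges] using ⟨he, hp⟩⟩

theorem walk_cross {a b : V} (p : MWalk G a b) (S : Set V) (h : ¬ (a ∈ S ↔ b ∈ S)) :
    ∃ e ∈ p.edges, ¬ ((G e).1 ∈ S ↔ (G e).2 ∈ S) := by
  induction p with
  | nil v => exact absurd Iff.rfl h
  | @cons u v w e he tail ih =>
    by_cases hv : u ∈ S ↔ v ∈ S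
    · obtain ⟨e', he', hc⟩ := ih (by tauto)
      exact ⟨e', by simp [MWalk.edges, he'], hc⟩
    · refine ⟨e, by simp [MWalk.edges], ?_⟩
      rcases he with he | he <;> rw [he] <;> simp only <;> tauto

theorem mcut_eq (G : E → V × V) (S : Set V) :
    mcut G S = Set.ncard {e : E | ¬ ((G e).1 ∈ S ↔ (G e).2 ∈ S)} := by
  unfold mcut
  congr 1
  ext e
  simp only [Set.mem_ofPred_eq]
  tauto

theorem mdeg_cast [Fintype E] (G : E → V × V) (v : V) :
    (mdeg G v : ZMod 2) = bd G Finset.univ v := by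
  have : mdeg G v = ∑ e : E, ((if (G e).1 = v then 1 else 0) + if (G e).2 = v then 1 else 0) := by
    unfold mdeg
    rw [Set.ncard_eq_toFinset_card', Set.toFinset_ofPred, Finset.card_filter,
      Fintype.sum_prod_type]
    exact Finset.sum_congr rfl fun e _ => by rw [Fintype.sum_bool]; rfl
  rw [this, bd, Finsupp.finsetSum_apply]
  push_cast
  simp [Finsupp.single_apply]

end ThreePairs

open ThreePairs in
/-- An Eulerian instance `(G, H)` with three pairs of
terminals, `H = (VG, {s₁t₁, s₂t₂, s₃t₃})`, is feasible if and only if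
`d_G(U) ≥ d_H(U)` holds for every subset `U ⊆ VG`. -/
theorem statement0 {V E : Type} [Fintype E]
    (G : E → V × V) (s1 t1 s2 t2 s3 t3 : V)
    (H : Fin 3 → V × V) (hH : H = ![(s1, t1), (s2, t2), (s3, t3)])
    (euler : MEulerian G H) :
    MFeasible G H ↔ ∀ U : Set V, mcut H U ≤ mcut G U := by
  classical
  subst hH
  constructor
  · -- Choose for each separated pair an edge of its walk that crosses `U`.
    rintro ⟨P, hP⟩ U
    rw [mcut_eq, mcut_eq]
    rcases isEmpty_or_nonempty E with hEmp | hEne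
    · refine le_of_eq_of_le ((Set.ncard_eq_zero (Set.toFinite _)).2 ?_) (Nat.zero_le _)
      refine Set.eq_empty_of_forall_notMem fun i hi => ?_
      obtain ⟨e, -⟩ := walk_cross (P i) U hi
      exact hEmp.false e
    choose! g hg hg' using fun i : Fin 3 => walk_cross (P i) U
    refine Set.ncard_le_ncard_of_injOn g (fun i hi => hg' i hi) ?_ (Set.toFinite _)
    intro i hi j hj hij
    by_contra hne
    exact hP i j hne (hg i hi) (hij ▸ hg j hj)
  · intro hcut
    have hE : bd G Finset.univ = pt s1 + pt t1 + (pt s2 + pt t2 + (pt s3 + pt t3)) := by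
      have h1 : bd G Finset.univ = bd ![(s1, t1), (s2, t2), (s3, t3)] Finset.univ := by
        ext v
        have h2 := (ZMod.natCast_eq_zero_iff_even).2 (euler v)
        rw [Nat.cast_add, mdeg_cast, mdeg_cast] at h2
        exact CharTwo.add_eq_zero.1 h2
      rw [h1, bd, Fin.sum_univ_three]
      simp [pt, add_assoc]
    simp only [mcut_eq] at hcut
    have one : ∀ S : Set V, ∀ i : Fin 3,
        ¬ ((![(s1, t1), (s2, t2), (s3, t3)] i).1 ∈ S ↔
          (![(s1, t1), (s2, t2), (s3, t3)] i).2 ∈ S) →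
        ∃ e, ¬ ((G e).1 ∈ S ↔ (G e).2 ∈ S) := by
      intro S i hi
      have hpos : 0 < Set.ncard {i : Fin 3 | ¬ ((![(s1, t1), (s2, t2), (s3, t3)] i).1 ∈ S ↔
          (![(s1, t1), (s2, t2), (s3, t3)] i).2 ∈ S)} :=
        (Set.ncard_pos (Set.toFinite _)).2 ⟨i, hi⟩
      exact (Set.ncard_pos (Set.toFinite _)).1 (hpos.trans_le (hcut S))
    have two : ∀ S : Set V, ¬ (s1 ∈ S ↔ t1 ∈ S) → ¬ (s2 ∈ S ↔ t2 ∈ S) → ∀ f : E,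
        ∃ e, e ≠ f ∧ ¬ ((G e).1 ∈ S ↔ (G e).2 ∈ S) := by
      intro S h1 h2 f
      have hlt : 1 < Set.ncard {i : Fin 3 | ¬ ((![(s1, t1), (s2, t2), (s3, t3)] i).1 ∈ S ↔
          (![(s1, t1), (s2, t2), (s3, t3)] i).2 ∈ S)} :=
        (Set.one_lt_ncard (Set.toFinite _)).2 ⟨0, by simpa using h1, 1, by simpa using h2,
          by decide⟩
      obtain ⟨e, he, hne⟩ := Set.exists_ne_of_one_lt_ncard (hlt.trans_le (hcut S)) f
      exact ⟨e, hne, he⟩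
    obtain ⟨P, X, hPX, hP, hX⟩ := twoPaths hE
      (fun S h h' => one S 0 (by simp [h, h']))
      (fun S h => one S 1 (by simpa using h))
      (fun S h1 h2 h3 h4 => two S (by tauto) (by tauto))
      (fun S h1 h2 h3 h4 => two S (by tauto) (by tauto))
    obtain ⟨P₁, hP₁, hb₁⟩ := exists_bd hP
    obtain ⟨P₂, hP₂, hb₂⟩ := exists_bd hX
    have d12 : Disjoint P₁ P₂ := Finset.disjoint_of_subset_left hP₁
      (Finset.disjoint_of_subset_right hP₂ hPX)
    -- The remaining edges have exactly `s3`, `t3` as odd vertices.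
    have hb₃ : bd G (Finset.univ \ (P₁ ∪ P₂)) = pt s3 + pt t3 := by
      rw [bd_sdiff (Finset.subset_univ _), bd_union d12, hE, hb₁, hb₂]
      calc _ = (pt s1 + pt s1) + (pt t1 + pt t1) + (pt s2 + pt s2) + (pt t2 + pt t2) +
            (pt s3 + pt t3) := by abel
        _ = _ := by simp only [self_add, zero_add]
    obtain ⟨w₁, hw₁⟩ := exists_walk (reach_of_bd hb₁)
    obtain ⟨w₂, hw₂⟩ := exists_walk (reach_of_bd hb₂)
    obtain ⟨w₃, hw₃⟩ := exists_walk (reach_of_bd hb₃)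
    have key : ∀ i : Fin 3, ∃ w : MWalk G (![(s1, t1), (s2, t2), (s3, t3)] i).1
        (![(s1, t1), (s2, t2), (s3, t3)] i).2,
        ∀ e ∈ w.edges, e ∈ (![P₁, P₂, Finset.univ \ (P₁ ∪ P₂)] : Fin 3 → Finset E) i := by
      intro i
      fin_cases i
      · exact ⟨w₁, hw₁⟩
      · exact ⟨w₂, hw₂⟩
      · exact ⟨w₃, hw₃⟩
    choose w hw using key
    refine ⟨w, fun i j hij e hi hj => ?_⟩
    have hi := hw i e hi
    have hj := hw j e hj
    rw [Finset.disjoint_left] at d12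
    fin_cases i <;> fin_cases j <;> simp at hij hi hj <;> grind
end

section
/- Let (G,H) be an Eulerian instance with three pairs of terminals, H = (VG, {s1t1, s2t2, s3t3}), and let T = {s1,s2,s3,t1,t2,t3}. Then (G,H) is feasible if and only if ν(U*) ≥ d_H(U*) holds for every subset U* ⊆ T. -/
/-- The demand edge `i` of `H` crosses the vertex set `U`. -/
def crossing {V E' : Type} (H : E' → V × V) (U : Set V) (i : E') : Prop :=
  ((H i).1 ∈ U ∧ (H i).2 ∉ U) ∨ ((H i).2 ∈ U ∧ (H i).1 ∉ U)

open Classical in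
/-- The endpoint of the demand edge `i` lying inside `U` (for a crossing edge). -/
noncomputable def srcEnd {V E' : Type} (H : E' → V × V) (U : Set V) (i : E') : V :=
  if (H i).1 ∈ U then (H i).1 else (H i).2

open Classical in
/-- The endpoint of the demand edge `i` lying outside `U` (for a crossing edge). -/
noncomputable def snkEnd {V E' : Type} (H : E' → V × V) (U : Set V) (i : E') : V :=
  if (H i).1 ∈ U then (H i).2 else (H i).1

/-- The graph `G(U*)`: to `G` add a new source `s* = Sum.inr 0`, a new sink
`t* = Sum.inr 1`, and, for each demand edge `sᵢtᵢ` of `H` crossing `U*` (with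
`sᵢ ∈ U*`, `tᵢ ∉ U*`), the two auxiliary edges `s*sᵢ` and `tᵢt*`. -/
noncomputable def auxGraph {V E E' : Type} (G : E → V × V) (H : E' → V × V) (U : Set V) :
    (E ⊕ ({i : E' // crossing H U i} × Bool)) → (V ⊕ Fin 2) × (V ⊕ Fin 2) :=
  fun e => match e with
  | .inl e => (Sum.inl (G e).1, Sum.inl (G e).2)
  | .inr (i, b) =>
      cond b (Sum.inr 0, Sum.inl (srcEnd H U i.1)) (Sum.inl (snkEnd H U i.1), Sum.inr 1)


/-! ### Linkage inside an edge set -/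

/-- `Linked G R u v`: some walk of `G` from `u` to `v` uses only edges of `R`. -/
def Linked {V E : Type} (G : E → V × V) (R : Set E) (u v : V) : Prop :=
  ∃ p : MWalk G u v, ∀ e ∈ p.edges, e ∈ R

theorem Linked.refl {V E : Type} (G : E → V × V) (R : Set E) (u : V) : Linked G R u u :=
  ⟨.nil u, by simp [MWalk.edges]⟩

theorem Linked.cons {V E : Type} {G : E → V × V} {R : Set E} {u v w : V} {e : E}
    (he : G e = (u, v) ∨ G e = (v, u)) (heR : e ∈ R) (h : Linked G R v w) :
    Linked G R u w := by
  obtain ⟨p, hp⟩ := h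
  exact ⟨.cons e he p, by simpa [MWalk.edges, heR] using hp⟩

theorem Linked.mono {V E : Type} {G : E → V × V} {R R' : Set E} {u v : V} (hR : R ⊆ R')
    (h : Linked G R u v) : Linked G R' u v :=
  h.imp fun _ hp e he => hR (hp e he)

theorem MWalk.linked {V E : Type} {G : E → V × V} {u v : V} (p : MWalk G u v) :
    Linked G {e | e ∈ p.edges} u v := ⟨p, fun _ h => h⟩

theorem Linked.trans {V E : Type} {G : E → V × V} {R : Set E} {u v w : V}
    (h : Linked G R u v) (h' : Linked G R v w) : Linked G R u w := by
  obtain ⟨p, hp⟩ := h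
  induction p with
  | nil => exact h'
  | cons e he p ih =>
    simp only [MWalk.edges, List.mem_cons, forall_eq_or_imp] at hp
    exact Linked.cons he hp.1 (ih h' hp.2)

theorem Linked.symm {V E : Type} {G : E → V × V} {R : Set E} {u v : V}
    (h : Linked G R u v) : Linked G R v u := by
  obtain ⟨p, hp⟩ := h
  induction p with
  | nil => exact Linked.refl _ _ _
  | cons e he p ih =>
    simp only [MWalk.edges, List.mem_cons, forall_eq_or_imp] at hp
    exact (ih hp.2).trans (Linked.cons he.symm hp.1 (Linked.refl _ _ _))

/-- A walk leaving a set of vertices traverses an edge of its boundary. -/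
theorem MWalk.exists_crossing {V E : Type} {G : E → V × V} {u v : V} (p : MWalk G u v)
    (X : Set V) (hu : u ∈ X) (hv : v ∉ X) : ∃ e ∈ p.edges, crossing G X e := by
  induction p with
  | nil => exact absurd hu hv
  | @cons u v w e he p ih =>
    by_cases hvX : v ∈ X
    · obtain ⟨f, hf, hc⟩ := ih hvX hv
      exact ⟨f, by simp [MWalk.edges, hf], hc⟩
    · refine ⟨e, by simp [MWalk.edges], ?_⟩
      rcases he with h | h <;> simp [crossing, h, hu, hvX]

/-! ### Cut functions and uncrossing -/

open Classical in
/-- `1` if exactly one of `u`, `v` lies in `X`, and `0` otherwise. -/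
noncomputable def cr {V : Type} (X : Set V) (u v : V) : ℤ :=
  if u ∈ X then (if v ∈ X then 0 else 1) else (if v ∈ X then 1 else 0)

open Classical in
/-- `1` if one of `u`, `v` lies in `A` and the other one in `B`, and `0` otherwise. -/
noncomputable def bt {V : Type} (A B : Set V) (u v : V) : ℤ :=
  if (u ∈ A ∧ v ∈ B) ∨ (v ∈ A ∧ u ∈ B) then 1 else 0

/-- The number of edges in `S` with exactly one end in `X`. -/
noncomputable def dG {V E : Type} (G : E → V × V) (S : Finset E) (X : Set V) : ℤ :=
  ∑ e ∈ S, cr X (G e).1 (G e).2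

/-- The number of edges in `S` joining `A` to `B`. -/
noncomputable def eG {V E : Type} (G : E → V × V) (S : Finset E) (A B : Set V) : ℤ :=
  ∑ e ∈ S, bt A B (G e).1 (G e).2

/-- The number of demands crossing `X`; the two ends of demand `i` are `D i true` and
`D i false`. -/
noncomputable def dH {V : Type} (D : Fin 3 → Bool → V) (X : Set V) : ℤ :=
  ∑ i, cr X (D i true) (D i false)

/-- The number of demands joining `A` to `B`. -/
noncomputable def eH {V : Type} (D : Fin 3 → Bool → V) (A B : Set V) : ℤ :=
  ∑ i, bt A B (D i true) (D i false)

theorem cr_comm {V : Type} (X : Set V) (u v : V) : cr X u v = cr X v u := by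
  unfold cr; split_ifs <;> rfl

theorem cr_compl {V : Type} (X : Set V) (u v : V) : cr Xᶜ u v = cr X u v := by
  by_cases hu : u ∈ X <;> by_cases hv : v ∈ X <;> simp [cr, hu, hv]

theorem bt_comm {V : Type} (A B : Set V) (u v : V) : bt A B u v = bt A B v u := by
  unfold bt; congr 1; exact propext or_comm

theorem cr_nonneg {V : Type} (X : Set V) (u v : V) : 0 ≤ cr X u v := by
  unfold cr; split_ifs <;> simp

theorem bt_nonneg {V : Type} (A B : Set V) (u v : V) : 0 ≤ bt A B u v := by
  unfold bt; split_ifs <;> simp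

theorem cr_bool {V : Type} (D : Bool → V) (X : Set V) (b : Bool) :
    cr X (D true) (D false) = cr X (D b) (D !b) := by
  cases b
  · exact cr_comm _ _ _
  · rfl

theorem bt_bool {V : Type} (D : Bool → V) (A B : Set V) (b : Bool) :
    bt A B (D true) (D false) = bt A B (D b) (D !b) := by
  cases b
  · exact bt_comm _ _ _ _
  · rfl

theorem bt_eq_zero {V : Type} {A B : Set V} {u v : V} :
    bt A B u v = 0 ↔ ¬ ((u ∈ A ∧ v ∈ B) ∨ (v ∈ A ∧ u ∈ B)) := by
  unfold bt; split_ifs with h <;> simp [h]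

theorem bt_ne_zero {V : Type} {A B : Set V} {u v : V} :
    bt A B u v ≠ 0 ↔ ((u ∈ A ∧ v ∈ B) ∨ (v ∈ A ∧ u ∈ B)) := by
  rw [Ne, bt_eq_zero, not_not]

theorem cr_union_inter {V : Type} (X Y : Set V) (u v : V) :
    cr X u v + cr Y u v =
      cr (X ∩ Y) u v + cr (X ∪ Y) u v + 2 * bt (X \ Y) (Y \ X) u v := by
  by_cases h1 : u ∈ X <;> by_cases h2 : v ∈ X <;> by_cases h3 : u ∈ Y <;>
    by_cases h4 : v ∈ Y <;> simp [cr, bt, h1, h2, h3, h4]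

theorem cr_diff_diff {V : Type} (X Y : Set V) (u v : V) :
    cr X u v + cr Y u v =
      cr (X \ Y) u v + cr (Y \ X) u v + 2 * bt (X ∩ Y) (X ∪ Y)ᶜ u v := by
  by_cases h1 : u ∈ X <;> by_cases h2 : v ∈ X <;> by_cases h3 : u ∈ Y <;>
    by_cases h4 : v ∈ Y <;> simp [cr, bt, h1, h2, h3, h4]

theorem cr_insert {V : Type} (A : Set V) (a : V) (ha : a ∉ A) (u v : V) :
    cr A u v + cr {a} u v = cr (A ∪ {a}) u v + 2 * bt A {a} u v := by
  by_cases h1 : u = a <;> by_cases h2 : v = a <;> by_cases h3 : u ∈ A <;>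
    by_cases h4 : v ∈ A <;> simp_all [cr, bt]

/-- The surplus `d_G(X) - d_H(X)` of the cut `X`. The cut condition says that all surpluses are
nonnegative, and a cut is called tight if its surplus is `0`. -/
noncomputable def sp {V E : Type} (G : E → V × V) (S : Finset E) (D : Fin 3 → Bool → V)
    (X : Set V) : ℤ := dG G S X - dH D X

section uncross
variable {V E : Type} (G : E → V × V) (S : Finset E) (D : Fin 3 → Bool → V)

theorem sp_union_inter (X Y : Set V) :
    sp G S D X + sp G S D Y = sp G S D (X ∩ Y) + sp G S D (X ∪ Y)
      + 2 * eG G S (X \ Y) (Y \ X) - 2 * eH D (X \ Y) (Y \ X) := by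
  have h1 : dG G S X + dG G S Y = dG G S (X ∩ Y) + dG G S (X ∪ Y)
      + 2 * eG G S (X \ Y) (Y \ X) := by
    simp only [dG, eG, Finset.mul_sum, ← Finset.sum_add_distrib]
    exact Finset.sum_congr rfl fun _ _ => cr_union_inter X Y _ _
  have h2 : dH D X + dH D Y = dH D (X ∩ Y) + dH D (X ∪ Y)
      + 2 * eH D (X \ Y) (Y \ X) := by
    simp only [dH, eH, Finset.mul_sum, ← Finset.sum_add_distrib]
    exact Finset.sum_congr rfl fun _ _ => cr_union_inter X Y _ _
  unfold sp
  linarith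

theorem sp_diff_diff (X Y : Set V) :
    sp G S D X + sp G S D Y = sp G S D (X \ Y) + sp G S D (Y \ X)
      + 2 * eG G S (X ∩ Y) (X ∪ Y)ᶜ - 2 * eH D (X ∩ Y) (X ∪ Y)ᶜ := by
  have h1 : dG G S X + dG G S Y = dG G S (X \ Y) + dG G S (Y \ X)
      + 2 * eG G S (X ∩ Y) (X ∪ Y)ᶜ := by
    simp only [dG, eG, Finset.mul_sum, ← Finset.sum_add_distrib]
    exact Finset.sum_congr rfl fun _ _ => cr_diff_diff X Y _ _
  have h2 : dH D X + dH D Y = dH D (X \ Y) + dH D (Y \ X)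
      + 2 * eH D (X ∩ Y) (X ∪ Y)ᶜ := by
    simp only [dH, eH, Finset.mul_sum, ← Finset.sum_add_distrib]
    exact Finset.sum_congr rfl fun _ _ => cr_diff_diff X Y _ _
  unfold sp
  linarith

theorem sp_insert (A : Set V) (a : V) (ha : a ∉ A) :
    sp G S D A + sp G S D {a} = sp G S D (A ∪ {a}) + 2 * eG G S A {a} - 2 * eH D A {a} := by
  have h1 : dG G S A + dG G S {a} = dG G S (A ∪ {a}) + 2 * eG G S A {a} := by
    simp only [dG, eG, Finset.mul_sum, ← Finset.sum_add_distrib]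
    exact Finset.sum_congr rfl fun _ _ => cr_insert A a ha _ _
  have h2 : dH D A + dH D {a} = dH D (A ∪ {a}) + 2 * eH D A {a} := by
    simp only [dH, eH, Finset.mul_sum, ← Finset.sum_add_distrib]
    exact Finset.sum_congr rfl fun _ _ => cr_insert A a ha _ _
  unfold sp
  linarith

theorem eG_nonneg (A B : Set V) : 0 ≤ eG G S A B :=
  Finset.sum_nonneg fun _ _ => bt_nonneg _ _ _ _

theorem eH_eq_zero {A B : Set V} :
    eH D A B = 0 ↔ ∀ i, bt A B (D i true) (D i false) = 0 := by
  unfold eH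
  rw [Finset.sum_eq_zero_iff_of_nonneg fun _ _ => bt_nonneg _ _ _ _]
  simp

theorem eG_pos {A B : Set V} {e : E} (he : e ∈ S) {u v : V}
    (h : G e = (u, v) ∨ G e = (v, u)) (hu : u ∈ A) (hv : v ∈ B) : 1 ≤ eG G S A B := by
  have : bt A B (G e).1 (G e).2 = 1 := by
    rcases h with h | h <;> simp [bt, h, hu, hv]
  unfold eG
  rw [← this]
  exact Finset.single_le_sum (f := fun e => bt A B (G e).1 (G e).2)
    (fun _ _ => bt_nonneg _ _ _ _) he

theorem dG_pos {X : Set V} {e : E} (he : e ∈ S) {u v : V}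
    (h : G e = (u, v) ∨ G e = (v, u)) (hu : u ∈ X) (hv : v ∉ X) : 1 ≤ dG G S X := by
  have : cr X (G e).1 (G e).2 = 1 := by
    rcases h with h | h <;> simp [cr, h, hu, hv]
  unfold dG
  rw [← this]
  exact Finset.single_le_sum (f := fun e => cr X (G e).1 (G e).2)
    (fun _ _ => cr_nonneg _ _ _) he

theorem dH_pos {X : Set V} {i : Fin 3} {b : Bool} (hu : D i b ∈ X) (hv : D i (!b) ∉ X) :
    1 ≤ dH D X := by
  have : cr X (D i true) (D i false) = 1 := by
    rw [cr_bool (D i) X b]; simp [cr, hu, hv]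
  unfold dH
  rw [← this]
  exact Finset.single_le_sum (f := fun i => cr X (D i true) (D i false))
    (fun _ _ => cr_nonneg _ _ _) (Finset.mem_univ i)

theorem exists_edge_of_dG_pos {u : V} (h : 1 ≤ dG G S {u}) :
    ∃ e ∈ S, ∃ x, (G e = (u, x) ∨ G e = (x, u)) := by
  by_contra! hc
  have : dG G S {u} = 0 := by
    refine Finset.sum_eq_zero fun e he => ?_
    have h1 : (G e).1 ≠ u := fun h => (hc e he (G e).2).1 (by rw [← h])
    have h2 : (G e).2 ≠ u := fun h => (hc e he (G e).1).2 (by rw [← h])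
    simp [cr, h1, h2]
  omega

end uncross

/-! ### Instances in which no demand can be advanced -/

/-- Every edge `ux` at an end `u` of a nontrivial demand `uw` is blocked: some tight set contains
`x` but neither `u` nor `w`. Equivalently, replacing the end `u` by `x` and deleting the edge
violates the cut condition. -/
def AllBlocked {V E : Type} (G : E → V × V) (S : Finset E) (D : Fin 3 → Bool → V) : Prop :=
  ∀ i b, D i b ≠ D i (!b) → ∀ e ∈ S, ∀ x, (G e = (D i b, x) ∨ G e = (x, D i b)) →
    ∃ X : Set V, x ∈ X ∧ D i b ∉ X ∧ D i (!b) ∉ X ∧ sp G S D X = 0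

section blocked
variable {V E : Type} {G : E → V × V} {S : Finset E} {D : Fin 3 → Bool → V}

/-- When everything is blocked, no tight set contains exactly one demand end: if `A` were such a
set, with the end `u`, then a tight set blocking an edge at `u` would uncross with `A`. -/
theorem no_single_end (hcut : ∀ X, 0 ≤ sp G S D X) (hB : AllBlocked G S D)
    (A : Set V) (i : Fin 3) (b : Bool) (hu : D i b ∈ A) (hw : D i (!b) ∉ A)
    (hA : sp G S D A = 0) (hoth : ∀ j, j ≠ i → ∀ c, D j c ∉ A) : False := by
  have hne : D i b ≠ D i (!b) := fun h => hw (h ▸ hu)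
  have hdeg : 1 ≤ dG G S {D i b} := by
    have h1 := dH_pos D (X := {D i b}) (i := i) (b := b) (by simp) (by simpa using hne.symm)
    have h2 := hcut {D i b}
    unfold sp at h2
    omega
  obtain ⟨e, he, x, hx⟩ := exists_edge_of_dG_pos G S hdeg
  obtain ⟨Z, hxZ, huZ, hwZ, hZ⟩ := hB i b hne e he x hx
  have hid := sp_union_inter G S D A Z
  have hp : eH D (A \ Z) (Z \ A) = 0 := by
    rw [eH_eq_zero]
    intro j
    rw [bt_eq_zero]
    by_cases hj : j = i
    · subst hj
      cases b <;> simp_all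
    · have := hoth j hj
      simp [this]
  have h1 := hcut (A ∩ Z)
  have h2 := hcut (A ∪ Z)
  have h3 := eG_nonneg G S (A \ Z) (Z \ A)
  by_cases hxA : x ∈ A
  · -- no demand crosses `A ∩ Z`, although the edge `e` does
    have h4 : dH D (A ∩ Z) = 0 := by
      refine Finset.sum_eq_zero fun j _ => ?_
      by_cases hj : j = i
      · subst hj
        cases b <;> simp_all [cr]
      · have := hoth j hj
        simp [cr, this]
    have h5 : 1 ≤ dG G S (A ∩ Z) :=
      dG_pos G S he hx.symm ⟨hxA, hxZ⟩ (fun h => huZ h.2)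
    unfold sp at h1 hid hA hZ h2
    omega
  · have h4 : 1 ≤ eG G S (A \ Z) (Z \ A) := eG_pos G S he hx ⟨hu, huZ⟩ ⟨hxZ, hxA⟩
    omega

/-- Two tight sets avoiding both ends of demand `i` have a tight union, unless both other demands
join `X \ Y` to `Y \ X`. -/
theorem union_tight_or (hpar : ∀ X, Even (sp G S D X)) (hcut : ∀ X, 0 ≤ sp G S D X)
    (hB : AllBlocked G S D) (i : Fin 3) (X Y : Set V)
    (hXi : ∀ b, D i b ∉ X) (hYi : ∀ b, D i b ∉ Y)
    (hX : sp G S D X = 0) (hY : sp G S D Y = 0) :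
    sp G S D (X ∪ Y) = 0 ∨
      ∀ j, j ≠ i → bt (X \ Y) (Y \ X) (D j true) (D j false) ≠ 0 := by
  by_contra! hcon
  obtain ⟨hU, k, hki, hk⟩ := hcon
  have hid := sp_union_inter G S D X Y
  have hp : eH D (X \ Y) (Y \ X) ≠ 0 := by
    intro hp
    have h1 := hcut (X ∩ Y)
    have h2 := hcut (X ∪ Y)
    have h3 := eG_nonneg G S (X \ Y) (Y \ X)
    omega
  rw [Ne, eH_eq_zero] at hp
  push Not at hp
  obtain ⟨j, hj⟩ := hp
  have hji : j ≠ i := by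
    rintro rfl
    apply hj
    rw [bt_eq_zero]
    simp [hXi]
  have hjk : j ≠ k := by
    rintro rfl
    exact hj hk
  have hall : ∀ l, l = i ∨ l = j ∨ l = k := by omega
  -- choose the orientation of demand `j` so that its end `b` lies in `X \ Y`
  obtain ⟨b, hbX, hbY⟩ : ∃ b, D j b ∈ X \ Y ∧ D j (!b) ∈ Y \ X := by
    rcases bt_ne_zero.1 hj with h | h
    · exact ⟨true, h⟩
    · exact ⟨false, h⟩
  have hid2 := sp_diff_diff G S D X Y
  have hA := hcut (X \ Y)
  have hB' := hcut (Y \ X)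
  have hC := eG_nonneg G S (X ∩ Y) (X ∪ Y)ᶜ
  have hi0 : bt (X ∩ Y) (X ∪ Y)ᶜ (D i true) (D i false) = 0 := by
    rw [bt_eq_zero]; simp [hXi]
  have hj0 : bt (X ∩ Y) (X ∪ Y)ᶜ (D j true) (D j false) = 0 := by
    rw [bt_bool (D j) _ _ b, bt_eq_zero]
    simp only [Set.mem_sdiff] at hbX hbY
    simp [hbX, hbY]
  have hq : eH D (X ∩ Y) (X ∪ Y)ᶜ = bt (X ∩ Y) (X ∪ Y)ᶜ (D k true) (D k false) := by
    unfold eH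
    refine Finset.sum_eq_single k (fun l _ hl => ?_) (by simp)
    rcases hall l with h | h | h
    · rw [h, hi0]
    · rw [h, hj0]
    · exact absurd h hl
  -- a difference that is tight and free of ends of demand `k` contains only one demand end
  have key1 : sp G S D (X \ Y) = 0 → (∀ c, D k c ∉ X \ Y) → False := fun h0 hk0 =>
    no_single_end hcut hB (X \ Y) j b hbX (fun h => hbY.2 h.1) h0 fun l hl c => by
      rcases hall l with h | h | h
      · subst h; exact fun h => hXi c h.1
      · exact absurd h hl
      · subst h; exact hk0 c
  have key2 : sp G S D (Y \ X) = 0 → (∀ c, D k c ∉ Y \ X) → False := fun h0 hk0 =>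
    no_single_end hcut hB (Y \ X) j (!b) hbY (fun h => hbX.2 (by simpa using h.1)) h0
      fun l hl c => by
      rcases hall l with h | h | h
      · subst h; exact fun h => hYi c h.1
      · exact absurd h hl
      · subst h; exact hk0 c
  by_cases hq0 : bt (X ∩ Y) (X ∪ Y)ᶜ (D k true) (D k false) = 0
  · have hA0 : sp G S D (X \ Y) = 0 := by omega
    have hB0 : sp G S D (Y \ X) = 0 := by omega
    by_cases hkA : ∀ c, D k c ∉ X \ Y
    · exact key1 hA0 hkA
    · push Not at hkA
      obtain ⟨c, hc⟩ := hkA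
      refine key2 hB0 fun c' hc' => ?_
      rw [bt_bool (D k) _ _ c, bt_eq_zero] at hk
      by_cases hcc : c' = c
      · subst hcc; exact hc.2 hc'.1
      · have : c' = !c := by cases c <;> cases c' <;> simp_all
        subst this
        exact hk (Or.inl ⟨hc, hc'⟩)
  · have hq1 : bt (X ∩ Y) (X ∪ Y)ᶜ (D k true) (D k false) = 1 := by
      unfold bt at hq0 ⊢
      split_ifs at hq0 ⊢ with h <;> simp_all
    have hk1 : ∀ c, D k c ∈ X ∩ Y ∨ D k c ∈ (X ∪ Y)ᶜ := by
      rcases bt_ne_zero.1 hq0 with h | h <;> intro c <;> cases c <;> tauto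
    have hkA : ∀ c, D k c ∉ X \ Y := fun c h => by
      rcases hk1 c with h' | h'
      · exact h.2 h'.2
      · exact h' (Or.inl h.1)
    have hkB : ∀ c, D k c ∉ Y \ X := fun c h => by
      rcases hk1 c with h' | h'
      · exact h.2 h'.1
      · exact h' (Or.inr h.1)
    obtain ⟨a, ha⟩ := hpar (X \ Y)
    obtain ⟨a', ha'⟩ := hpar (Y \ X)
    -- the two surpluses are even and add up to at most `2`
    by_cases hA0 : sp G S D (X \ Y) = 0
    · exact key1 hA0 hkA
    · exact key2 (by omega) hkB

/-- A single tight set cannot contain the other ends of all edges at a terminal of a nontrivial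
demand `i` while avoiding the ends of demand `i`: adding the terminal to it would violate the
cut condition. -/
theorem no_single_cover (hcut : ∀ X, 0 ≤ sp G S D X) (i : Fin 3)
    (hne : D i true ≠ D i false) (X : Set V) (hXi : ∀ b, D i b ∉ X) (hX : sp G S D X = 0)
    (hcov : ∀ e ∈ S, ∀ x, x ≠ D i true →
      (G e = (D i true, x) ∨ G e = (x, D i true)) → x ∈ X) : False := by
  have hid := sp_insert G S D X (D i true) (hXi true)
  have h1 := hcut (X ∪ {D i true})
  have h2 := hcut {D i true}
  have h3 : dG G S {D i true} ≤ eG G S X {D i true} := by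
    refine Finset.sum_le_sum fun e he => ?_
    by_cases ha : (G e).1 = D i true <;> by_cases hb : (G e).2 = D i true
    · simp [cr, ha, hb, bt_nonneg]
    · have := hcov e he (G e).2 hb (Or.inl (by rw [← ha]))
      simp [cr, bt, ha, hb, this]
    · have := hcov e he (G e).1 ha (Or.inr (by rw [← hb]))
      simp [cr, bt, ha, hb, this]
    · simp [cr, ha, hb, bt_nonneg]
  have h4 : eH D X {D i true} < dH D {D i true} := by
    refine Finset.sum_lt_sum (fun j _ => ?_) ⟨i, Finset.mem_univ i, ?_⟩
    · have := hXi true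
      by_cases ha : D j true = D i true <;> by_cases hb : D j false = D i true <;>
        simp_all [cr, bt]
      split_ifs <;> simp
      split_ifs <;> simp
    · have := hXi true
      have := hXi false
      simp_all [cr, bt, hne.symm]
  unfold sp at *
  omega

/-- In an instance satisfying the parity and cut conditions in which everything is blocked, all
demands are trivial. -/
theorem blocked_trivial (hpar : ∀ X, Even (sp G S D X)) (hcut : ∀ X, 0 ≤ sp G S D X)
    (hB : AllBlocked G S D) (i : Fin 3) : D i true = D i false := by
  classical
  by_contra hne
  have hor := union_tight_or hpar hcut hB i
  -- two tight sets suffice to cover all edges at `D i true`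
  have cover : ∀ K : Finset E, K ⊆ S → ∃ X Y : Set V, (∀ b, D i b ∉ X) ∧ (∀ b, D i b ∉ Y) ∧
      sp G S D X = 0 ∧ sp G S D Y = 0 ∧ ∀ e ∈ K, ∀ x, x ≠ D i true →
        (G e = (D i true, x) ∨ G e = (x, D i true)) → x ∈ X ∪ Y := by
    intro K
    induction K using Finset.induction_on with
    | empty =>
      intro _
      have : sp G S D ∅ = 0 := by simp [sp, dG, dH, cr]
      exact ⟨∅, ∅, by simp, by simp, this, this, by simp⟩
    | insert e K _ ih =>
      intro hK
      obtain ⟨X, Y, hXi, hYi, hX, hY, hXY⟩ :=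
        ih ((Finset.subset_insert e K).trans hK)
      by_cases hex : ∃ z, z ≠ D i true ∧ (G e = (D i true, z) ∨ G e = (z, D i true))
      swap
      · refine ⟨X, Y, hXi, hYi, hX, hY, fun f hf x hx hfx => ?_⟩
        rcases Finset.mem_insert.1 hf with rfl | hf
        · exact absurd ⟨x, hx, hfx⟩ hex
        · exact hXY f hf x hx hfx
      obtain ⟨z, hz, hez⟩ := hex
      obtain ⟨Z, hzZ, hZ1, hZ2, hZ⟩ :=
        hB i true hne e (hK (Finset.mem_insert_self e K)) z hez
      have hZi : ∀ b, D i b ∉ Z := by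
        intro b; cases b
        · exact hZ2
        · exact hZ1
      have hcov : ∀ f ∈ insert e K, ∀ x, x ≠ D i true →
          (G f = (D i true, x) ∨ G f = (x, D i true)) → x ∈ X ∪ Y ∪ Z := by
        intro f hf x hx hfx
        rcases Finset.mem_insert.1 hf with rfl | hf
        · have : x = z := by
            rcases hez with h | h <;> rcases hfx with h' | h' <;> rw [h] at h' <;>
              simp only [Prod.mk.injEq] at h' <;> grind
          subst this
          exact Or.inr hzZ
        · exact Or.inl (hXY f hf x hx hfx)
      have hun : ∀ {P Q : Set V}, (∀ b, D i b ∉ P) → (∀ b, D i b ∉ Q) →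
          ∀ b, D i b ∉ P ∪ Q := fun h h' b hb => hb.elim (h b) (h' b)
      rcases hor X Z hXi hZi hX hZ with h1 | h1
      · refine ⟨X ∪ Z, Y, hun hXi hZi, hYi, h1, hY, ?_⟩
        rwa [Set.union_right_comm]
      rcases hor Y Z hYi hZi hY hZ with h2 | h2
      · refine ⟨X, Y ∪ Z, hXi, hun hYi hZi, hX, h2, ?_⟩
        rwa [← Set.union_assoc]
      rcases hor X Y hXi hYi hX hY with h3 | h3
      · exact ⟨X ∪ Y, Z, hun hXi hYi, hZi, h3, hZ, hcov⟩
      -- a demand has only two ends, so three sets cannot pairwise separate it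
      exfalso
      obtain ⟨j, hj⟩ : ∃ j : Fin 3, j ≠ i := ⟨i + 1, by omega⟩
      have e1 := bt_ne_zero.1 (h1 j hj)
      have e2 := bt_ne_zero.1 (h2 j hj)
      have e3 := bt_ne_zero.1 (h3 j hj)
      simp only [Set.mem_sdiff] at e1 e2 e3
      tauto
  obtain ⟨X, Y, hXi, hYi, hX, hY, hcov⟩ := cover S subset_rfl
  rcases hor X Y hXi hYi hX hY with hU | hsep
  · exact no_single_cover hcut i hne (X ∪ Y) (fun b hb => hb.elim (hXi b) (hYi b)) hU hcov
  have hid2 := sp_diff_diff G S D X Y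
  have hA := hcut (X \ Y)
  have hB' := hcut (Y \ X)
  have hC := eG_nonneg G S (X ∩ Y) (X ∪ Y)ᶜ
  have hend : ∀ j, j ≠ i → ∀ c, D j c ∈ X \ Y ∨ D j c ∈ Y \ X := by
    intro j hj c
    have := bt_ne_zero.1 (hsep j hj)
    cases c <;> tauto
  have hq : eH D (X ∩ Y) (X ∪ Y)ᶜ = 0 := by
    rw [eH_eq_zero]
    intro j
    rw [bt_eq_zero]
    by_cases hj : j = i
    · subst hj; simp [hXi]
    · have h1 := hend j hj true
      have h2 := hend j hj false
      simp only [Set.mem_sdiff, Set.mem_inter_iff, Set.mem_compl_iff, Set.mem_union] at *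
      tauto
  have hA0 : sp G S D (X \ Y) = 0 := by omega
  have hB0 : sp G S D (Y \ X) = 0 := by omega
  have hC0 : eG G S (X ∩ Y) (X ∪ Y)ᶜ = 0 := by omega
  have huX : D i true ∉ X := hXi true
  have huY : D i true ∉ Y := hYi true
  have hz : ∀ W : Set V, (∀ b, D i b ∉ W) → eH D W {D i true} = 0 := by
    intro W hW
    rw [eH_eq_zero]
    intro j
    rw [bt_eq_zero]
    by_cases hj : j = i
    · subst hj; simp [hW]
    · have h1 : ∀ c, D j c ≠ D i true := by
        intro c hc
        rcases hend j hj c with h | h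
        · exact huX (hc ▸ h.1)
        · exact huY (hc ▸ h.1)
      simp [h1]
  have i1 := sp_insert G S D (X \ Y) (D i true) (fun h => huX h.1)
  have i2 := sp_insert G S D (Y \ X) (D i true) (fun h => huY h.1)
  rw [hz _ fun b h => hXi b h.1] at i1
  rw [hz _ fun b h => hYi b h.1] at i2
  have c1 := hcut (X \ Y ∪ {D i true})
  have c2 := hcut (Y \ X ∪ {D i true})
  -- every edge at `D i true` leads to `X \ Y` or to `Y \ X`
  have h3 : dG G S {D i true} ≤ eG G S (X \ Y) {D i true} + eG G S (Y \ X) {D i true} := by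
    unfold dG eG
    rw [← Finset.sum_add_distrib]
    refine Finset.sum_le_sum fun e he => ?_
    have n1 := bt_nonneg (X \ Y) {D i true} (G e).1 (G e).2
    have n2 := bt_nonneg (Y \ X) {D i true} (G e).1 (G e).2
    have hnot : ∀ x, (G e = (x, D i true) ∨ G e = (D i true, x)) → x ∈ X → x ∈ Y → False := by
      intro x hx h h'
      have := eG_pos G S (A := X ∩ Y) (B := (X ∪ Y)ᶜ) he hx ⟨h, h'⟩ (by simp [huX, huY])
      omega
    by_cases ha : (G e).1 = D i true <;> by_cases hb : (G e).2 = D i true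
    · have : cr {D i true} (G e).1 (G e).2 = 0 := by simp [cr, ha, hb]
      omega
    · have h1 := hcov e he (G e).2 hb (Or.inl (by rw [← ha]))
      have h2 := hnot (G e).2 (Or.inr (by rw [← ha]))
      rcases h1 with h | h
      · have h' : (G e).2 ∉ Y := h2 h
        simp [cr, bt, ha, hb, h, h']
      · have h' : (G e).2 ∉ X := fun hh => h2 hh h
        simp [cr, bt, ha, hb, h, h']
    · have h1 := hcov e he (G e).1 ha (Or.inr (by rw [← hb]))
      have h2 := hnot (G e).1 (Or.inl (by rw [← hb]))
      rcases h1 with h | h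
      · have h' : (G e).1 ∉ Y := h2 h
        simp [cr, bt, ha, hb, h, h']
      · have h' : (G e).1 ∉ X := fun hh => h2 hh h
        simp [cr, bt, ha, hb, h, h']
    · have : cr {D i true} (G e).1 (G e).2 = 0 := by simp [cr, ha, hb]
      omega
  have h4 : 1 ≤ dH D {D i true} :=
    dH_pos D (i := i) (b := true) (by simp) (by simpa using Ne.symm hne)
  unfold sp at *
  omega

end blocked

/-! ### Sufficiency of the cut condition -/

/-- The parity condition and the cut condition imply that the demands can be routed inside
pairwise disjoint subsets of `S`. The induction deletes one edge `ux` and moves a demand end from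
`u` to `x`. -/
theorem routing {V E : Type} (G : E → V × V) (n : ℕ) :
    ∀ (S : Finset E) (D : Fin 3 → Bool → V), S.card = n →
      (∀ X, Even (sp G S D X)) → (∀ X, 0 ≤ sp G S D X) →
      ∃ R : Fin 3 → Set E, (∀ i, R i ⊆ S) ∧ (∀ i j, i ≠ j → Disjoint (R i) (R j)) ∧
        ∀ i b, Linked G (R i) (D i b) (D i (!b)) := by
  classical
  induction n with
  | zero =>
    intro S D hS hpar hcut
    have hS0 : S = ∅ := Finset.card_eq_zero.1 hS
    have htriv := blocked_trivial hpar hcut (fun i b _ e he => by simp [hS0] at he)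
    refine ⟨fun _ => ∅, by simp, by simp, fun i b => ?_⟩
    have : D i b = D i (!b) := by cases b <;> simp [htriv i]
    rw [← this]
    exact Linked.refl _ _ _
  | succ n ih =>
    intro S D hS hpar hcut
    by_cases hB : AllBlocked G S D
    · have htriv := blocked_trivial hpar hcut hB
      refine ⟨fun _ => ∅, by simp, by simp, fun i b => ?_⟩
      have : D i b = D i (!b) := by cases b <;> simp [htriv i]
      rw [← this]
      exact Linked.refl _ _ _
    unfold AllBlocked at hB
    push Not at hB
    obtain ⟨i, b, hne, e, he, x, hx, hfree⟩ := hB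
    set D' : Fin 3 → Bool → V := Function.update D i (Function.update (D i) b x) with hD'
    have hD'b : D' i b = x := by simp [hD']
    have hD'nb : D' i (!b) = D i (!b) := by
      simp [hD']
    have hD'j : ∀ j, j ≠ i → D' j = D j := fun j hj => by simp [hD', hj]
    have hsp : ∀ X, sp G (S.erase e) D' X =
        sp G S D X - cr X (D i b) x + cr X (D i b) (D i (!b)) - cr X x (D i (!b)) := by
      intro X
      have h1 : dG G (S.erase e) X + cr X (D i b) x = dG G S X := by
        have : cr X (D i b) x = cr X (G e).1 (G e).2 := by
          rcases hx with h | h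
          · rw [h]
          · rw [h, cr_comm]
        rw [this]
        exact Finset.sum_erase_add S _ he
      have h2 : dH D' X - cr X x (D i (!b)) = dH D X - cr X (D i b) (D i (!b)) := by
        unfold dH
        rw [← Finset.sum_erase_add _ _ (Finset.mem_univ i),
          ← Finset.sum_erase_add (Finset.univ) (fun j => cr X (D j true) (D j false))
            (Finset.mem_univ i), cr_bool (D' i) X b, cr_bool (D i) X b, hD'b, hD'nb,
          Finset.sum_congr rfl fun j hj => by rw [hD'j j (Finset.ne_of_mem_erase hj)]]
        ring
      unfold sp
      linarith
    obtain ⟨R, hRS, hRd, hRl⟩ := ih (S.erase e) D'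
      (by rw [Finset.card_erase_of_mem he, hS]; rfl)
      (fun X => by
        obtain ⟨a, ha⟩ := hpar X
        rw [hsp, ha, Int.even_iff]
        unfold cr
        split_ifs <;> omega)
      (fun X => by
        rw [hsp]
        have h0 := hcut X
        obtain ⟨a, ha⟩ := hpar X
        by_cases hX0 : sp G S D X = 0
        · -- a tight `X` or its complement would block the edge `e`
          have hc0 : sp G S D Xᶜ = 0 := by
            simpa only [sp, dG, dH, cr_compl] using hX0
          have f1 := hfree X
          have f2 := hfree Xᶜ
          simp only [Set.mem_compl_iff, not_not] at f2
          unfold cr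
          split_ifs <;> first | omega | (exfalso; tauto)
        · unfold cr
          split_ifs <;> omega)
    have heR : ∀ j, e ∉ R j := fun j h => by simpa using hRS j h
    refine ⟨fun j => if j = i then insert e (R j) else R j, fun j => ?_, fun j k hjk => ?_,
      fun j => ?_⟩
    · have : R j ⊆ S := (hRS j).trans (by simp)
      dsimp only
      split_ifs
      · exact Set.insert_subset he this
      · exact this
    · have := hRd j k hjk
      dsimp only
      split_ifs with h1 h2 h2
      · exact absurd (h1.trans h2.symm) hjk
      · exact Set.disjoint_insert_left.2 ⟨heR k, this⟩
      · exact Set.disjoint_insert_right.2 ⟨heR j, this⟩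
      · exact this
    · by_cases hj : j = i
      · subst hj
        simp only [if_true]
        have h := (hRl j b).mono (Set.subset_insert e (R j))
        rw [hD'b, hD'nb] at h
        have h' := Linked.cons hx (Set.mem_insert e (R j)) h
        intro c
        by_cases hc : c = b
        · subst hc; exact h'
        · have : c = !b := by cases b <;> cases c <;> simp_all
          subst this
          simpa using h'.symm
      · simp only [if_neg hj]
        intro c
        rw [← hD'j j hj]
        exact hRl j c

/-! ### Translation of the hypotheses -/

open Classical in
theorem mcut_eq {V E : Type} [Fintype E] (G : E → V × V) (X : Set V) :
    (mcut G X : ℤ) = ∑ e, cr X (G e).1 (G e).2 := by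
  have : mcut G X = (Finset.univ.filter fun e => crossing G X e).card := by
    rw [← Set.ncard_coe_finset]
    unfold mcut crossing
    congr 1
    ext e
    simp
  rw [this, Finset.card_filter]
  push_cast
  refine Finset.sum_congr rfl fun e _ => ?_
  by_cases h1 : (G e).1 ∈ X <;> by_cases h2 : (G e).2 ∈ X <;> simp [crossing, cr, h1, h2]

/-- All cuts of an Eulerian `G + H` are even: the size of a cut has the parity of the sum of the
degrees over one of its sides. -/
theorem even_cut {V E E' : Type} [Fintype E] [Fintype E'] (G : E → V × V) (H : E' → V × V)
    (euler : MEulerian G H) (X : Set V) :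
    Even (∑ e, cr X (G e).1 (G e).2 + ∑ i, cr X (H i).1 (H i).2) := by
  classical
  -- the end of an edge-end of `G + H`
  let f : (E × Bool) ⊕ (E' × Bool) → V :=
    Sum.elim (fun p => cond p.2 (G p.1).1 (G p.1).2) (fun p => cond p.2 (H p.1).1 (H p.1).2)
  have hfib : ∀ v, Even (Finset.univ.filter fun p => f p = v).card := by
    intro v
    have h1 : mdeg G v =
        (Finset.univ.filter fun p : E × Bool => cond p.2 (G p.1).1 (G p.1).2 = v).card := by
      rw [← Set.ncard_coe_finset]; simp [mdeg]
    have h2 : mdeg H v =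
        (Finset.univ.filter fun p : E' × Bool => cond p.2 (H p.1).1 (H p.1).2 = v).card := by
      rw [← Set.ncard_coe_finset]; simp [mdeg]
    have h3 : (Finset.univ.filter fun p => f p = v).card = mdeg G v + mdeg H v := by
      rw [h1, h2, Finset.card_filter, Finset.card_filter, Finset.card_filter,
        Fintype.sum_sum_type]
      rfl
    rw [h3]
    exact euler v
  have hX : Even (Finset.univ.filter fun p => f p ∈ X).card := by
    rw [Finset.card_eq_sum_card_image f]
    refine Finset.even_sum _ fun v hv => ?_
    obtain ⟨p, hp, rfl⟩ := Finset.mem_image.1 hv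
    have hpX : f p ∈ X := (Finset.mem_filter.1 hp).2
    have heq : (Finset.univ.filter fun p => f p ∈ X).filter (fun q => f q = f p) =
        Finset.univ.filter fun q => f q = f p := by
      ext q
      simp only [Finset.mem_filter, Finset.mem_univ, true_and, and_iff_right_iff_imp]
      intro h
      rw [h]
      exact hpX
    rw [heq]
    exact hfib (f p)
  obtain ⟨g, hg⟩ : ∃ g : V → ℤ, ∀ v, g v = if v ∈ X then 1 else 0 := ⟨_, fun _ => rfl⟩
  rw [← Int.even_coe_nat, ← Finset.sum_boole, ← Finset.sum_congr rfl fun p _ => hg (f p),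
    Fintype.sum_sum_type, Fintype.sum_prod_type, Fintype.sum_prod_type] at hX
  simp only [f, Fintype.sum_bool, Sum.elim_inl, Sum.elim_inr, cond_true, cond_false] at hX
  have hcr : ∀ u v : V, ∃ k : ℤ, cr X u v = g u + g v + 2 * k := by
    intro u v
    by_cases h1 : u ∈ X <;> by_cases h2 : v ∈ X <;> simp only [cr, hg, h1, h2, if_true, if_false]
    · exact ⟨-1, by norm_num⟩
    · exact ⟨0, by norm_num⟩
    · exact ⟨0, by norm_num⟩
    · exact ⟨0, by norm_num⟩
  choose k hk using hcr
  simp only [hk, Finset.sum_add_distrib, ← Finset.mul_sum] at hX ⊢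
  rw [Int.even_iff] at hX ⊢
  omega

/-- Disjoint `s*`–`t*` walks in `G(U)`, one per demand crossing `U = X ∩ T`, have to leave
`X ∪ {s*}` through edges of `G`, so the cut `X` is large enough. -/
theorem cut_of_walks {V E : Type} [Fintype E] (G : E → V × V) (H : Fin 3 → V × V)
    (T X : Set V) (hT : ∀ i, (H i).1 ∈ T ∧ (H i).2 ∈ T)
    (P : Fin (mcut H (X ∩ T)) → MWalk (auxGraph G H (X ∩ T)) (Sum.inr 0) (Sum.inr 1))
    (hP : ∀ i j, i ≠ j → List.Disjoint (P i).edges (P j).edges) :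
    mcut H X ≤ mcut G X := by
  have hmc : mcut H (X ∩ T) = mcut H X := by
    unfold mcut
    simp [hT]
  let X' : Set (V ⊕ Fin 2) := {y | y = Sum.inr 0 ∨ ∃ v ∈ X, y = Sum.inl v}
  have hcr : ∀ i, ∃ e : E, crossing G X e ∧ Sum.inl e ∈ (P i).edges := by
    intro i
    obtain ⟨e, he, hc⟩ := (P i).exists_crossing X' (by simp [X']) (by simp [X'])
    rcases e with e | ⟨⟨i, hi⟩, b⟩
    · refine ⟨e, ?_, he⟩
      simpa [crossing, auxGraph, X'] using hc
    · exfalso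
      have hi' := hi
      unfold crossing at hi'
      by_cases h1 : (H i).1 ∈ X <;> by_cases h2 : (H i).2 ∈ X <;> simp [h1, h2, hT i] at hi' <;>
        cases b <;> simp [crossing, auxGraph, X', srcEnd, snkEnd, h1, h2, hT i] at hc
  choose e he1 he2 using hcr
  have hinj : Function.Injective e := by
    intro i j hij
    by_contra hne
    exact hP i j hne (he2 i) (hij ▸ he2 j)
  rw [← hmc]
  have := Set.ncard_le_ncard (s := Set.range e) (t := {e | crossing G X e})
    (by rintro _ ⟨i, rfl⟩; exact he1 i) (Set.toFinite _)
  rw [← Set.image_univ, Set.ncard_image_of_injective _ hinj, Set.ncard_univ,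
    Nat.card_eq_fintype_card, Fintype.card_fin] at this
  exact this

theorem Linked.aux {V E E' : Type} {G : E → V × V} {H : E' → V × V} {U : Set V} {R : Set E}
    {u v : V} (h : Linked G R u v) :
    Linked (auxGraph G H U) (Sum.inl '' R) (Sum.inl u) (Sum.inl v) := by
  obtain ⟨p, hp⟩ := h
  induction p with
  | nil => exact Linked.refl _ _ _
  | @cons u v w e he p ih =>
    simp only [MWalk.edges, List.mem_cons, forall_eq_or_imp] at hp
    refine Linked.cons (e := Sum.inl e) ?_ (Set.mem_image_of_mem _ hp.1) (ih hp.2)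
    rcases he with h | h <;> simp [auxGraph, h]

/-- Routed demands crossing `U` extend to disjoint `s*`–`t*` walks. -/
theorem walks_of_feasible {V E : Type} (G : E → V × V) (H : Fin 3 → V × V)
    (h : MFeasible G H) (U : Set V) :
    ∃ P : Fin (mcut H U) → MWalk (auxGraph G H U) (Sum.inr 0) (Sum.inr 1),
      ∀ i j, i ≠ j → List.Disjoint (P i).edges (P j).edges := by
  obtain ⟨Q, hQ⟩ := h
  have key : ∀ i : {i // crossing H U i}, Linked (auxGraph G H U)
      ((Sum.inl '' {e | e ∈ (Q i.1).edges}) ∪ {x | ∃ b, x = Sum.inr (i, b)})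
      (Sum.inr 0) (Sum.inr 1) := by
    intro i
    have h1 : Linked G {e | e ∈ (Q i.1).edges} (srcEnd H U i.1) (snkEnd H U i.1) := by
      unfold srcEnd snkEnd
      split_ifs
      · exact (Q i.1).linked
      · exact (Q i.1).linked.symm
    refine Linked.cons (e := Sum.inr (i, true)) (v := Sum.inl (srcEnd H U i.1))
      (Or.inl rfl) (Or.inr ⟨true, rfl⟩) ?_
    refine Linked.trans (h1.aux.mono Set.subset_union_left) ?_
    exact Linked.cons (e := Sum.inr (i, false)) (Or.inl rfl) (Or.inr ⟨false, rfl⟩)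
      (Linked.refl _ _ _)
  choose P hP using key
  have hcard : mcut H U = Nat.card {i // crossing H U i} := rfl
  let φ : Fin (mcut H U) ≃ {i // crossing H U i} :=
    (finCongr hcard).trans (Finite.equivFin _).symm
  refine ⟨fun k => P (φ k), fun k l hkl x hx hy => ?_⟩
  have hne : φ k ≠ φ l := fun h => hkl (φ.injective h)
  have hne' : (φ k).1 ≠ (φ l).1 := fun h => hne (Subtype.ext h)
  rcases hP _ x hx with ⟨e, he, rfl⟩ | ⟨b, rfl⟩
  · rcases hP _ _ hy with ⟨e', he', h⟩ | ⟨b, h⟩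
    · obtain rfl := Sum.inl_injective h
      exact hQ _ _ hne' he he'
    · cases h
  · rcases hP _ _ hy with ⟨e', he', h⟩ | ⟨b', h⟩
    · cases h
    · simp only [Sum.inr.injEq, Prod.mk.injEq] at h
      exact hne h.1

/-- An Eulerian instance `(G, H)` with three pairs of
terminals and terminal set `T` is feasible if and only if for every signature
`U* ⊆ T` one has `ν(U*) ≥ d_H(U*)`, i.e. the graph `G(U*)` contains `d_H(U*)`
pairwise edge-disjoint `s*`–`t*` paths. -/
theorem statement10 {V E : Type} [Fintype E]
    (G : E → V × V) (s1 t1 s2 t2 s3 t3 : V)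
    (H : Fin 3 → V × V) (hH : H = ![(s1, t1), (s2, t2), (s3, t3)])
    (T : Set V) (hT : T = {s1, s2, s3, t1, t2, t3})
    (euler : MEulerian G H) :
    MFeasible G H ↔
      ∀ U : Set V, U ⊆ T →
        ∃ P : Fin (mcut H U) → MWalk (auxGraph G H U) (Sum.inr 0) (Sum.inr 1),
          ∀ i j, i ≠ j → List.Disjoint (P i).edges (P j).edges := by
  classical
  have hT' : ∀ i, (H i).1 ∈ T ∧ (H i).2 ∈ T := by
    intro i
    fin_cases i <;> simp [hH, hT]
  refine ⟨fun h U _ => walks_of_feasible G H h U, fun h => ?_⟩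
  let D : Fin 3 → Bool → V := fun i b => cond b (H i).1 (H i).2
  have hspe : ∀ X, sp G Finset.univ D X = (mcut G X : ℤ) - mcut H X := by
    intro X
    rw [mcut_eq, mcut_eq]
    rfl
  obtain ⟨R, -, hRd, hRl⟩ := routing G _ Finset.univ D rfl
    (fun X => by
      have := even_cut G H euler X
      rw [← mcut_eq, ← mcut_eq] at this
      rw [hspe, Int.even_sub, ← Int.even_add]
      exact this)
    (fun X => by
      obtain ⟨P, hP⟩ := h (X ∩ T) Set.inter_subset_right
      have := cut_of_walks G H T X hT' P hP
      rw [hspe]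
      omega)
  choose P hP using fun i => hRl i true
  exact ⟨P, fun i j hij e he he' =>
    Set.disjoint_left.1 (hRd i j hij) (hP i e he) (hP j e he')⟩
end
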